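/- arXiv:2001.04517 — 2 statements merged into one kernel-verified Lean document; each statement's English description precedes it below -/
import Mathlib

section
/- For every integer t ≥ 1 there exists a constant c_t such that for every graph G with no K_t minor and every ball hypergraph 𝓗 of G, the transversal number satisfies τ(𝓗) ≤ c_t · ν(𝓗), where ν(𝓗) is the matching number. -/
/-- The ball of radius `r` centered at `v` in the graph metric of `G`:
all vertices `u` with `d_G(v,u) ≤ r` (in particular, `u` must be reachable from `v`). -/
def SimpleGraph.gBall {V : Type*} (G : SimpleGraph V) (v : V) (r : ℕ) : Set V :=
  {u | G.Reachable v u ∧ G.dist v u ≤ r}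

/-- A ball hypergraph of `G` is given by its edge set `E`: a collection of subsets of
`V(G)`, each of which is a ball of `G`. -/
def IsBallHypergraph {V : Type*} (G : SimpleGraph V) (E : Set (Set V)) : Prop :=
  ∀ e ∈ E, ∃ v r, e = G.gBall v r

/-- `H` is a minor of `G`: there are pairwise disjoint connected nonempty branch sets
in `G`, one for each vertex of `H`, with an edge of `G` between the branch sets of any
two adjacent vertices of `H`. -/
def GraphMinor {W : Type*} {V : Type*} (H : SimpleGraph W) (G : SimpleGraph V) : Prop :=
  ∃ f : W → Set V,
    (∀ w, (G.induce (f w)).Connected) ∧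
    (Pairwise fun w₁ w₂ => Disjoint (f w₁) (f w₂)) ∧
    (∀ w₁ w₂, H.Adj w₁ w₂ → ∃ u ∈ f w₁, ∃ v ∈ f w₂, G.Adj u v)

/-- The matching number of the hypergraph with edge set `E`: the maximum number of
pairwise disjoint edges. -/
noncomputable def matchingNumber {V : Type*} [Fintype V] (E : Set (Set V)) : ℕ :=
  sSup {n | ∃ M : Finset (Set V), ↑M ⊆ E ∧ (M : Set (Set V)).Pairwise Disjoint ∧ M.card = n}

/-- The transversal number of the hypergraph with edge set `E`: the minimum size of a
set of vertices meeting every edge. -/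
noncomputable def transversalNumber {V : Type*} [Fintype V] (E : Set (Set V)) : ℕ :=
  sInf {n | ∃ T : Finset V, (∀ e ∈ E, ∃ v ∈ T, v ∈ e) ∧ T.card = n}

section BallHypergraphs

open Finset

section Minors

open Classical in
/-- The number of ordered pairs of adjacent vertices of `S`, i.e. twice the number of edges
of `G` spanned by `S`. -/
noncomputable def SimpleGraph.dartCount {V : Type*} (G : SimpleGraph V) (S : Finset V) : ℕ :=
  ∑ v ∈ S, #{u ∈ S | G.Adj v u}

open Classical in
lemma SimpleGraph.dartCount_insert {V : Type*} (G : SimpleGraph V) {S : Finset V} {v : V}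
    (hv : v ∉ S) :
    G.dartCount (insert v S) = G.dartCount S + 2 * #{u ∈ S | G.Adj v u} := by
  have h1 : ∀ w, #{u ∈ insert v S | G.Adj w u}
      = (if G.Adj w v then 1 else 0) + #{u ∈ S | G.Adj w u} := by
    intro w
    rw [filter_insert]
    split_ifs with h
    · rw [card_insert_of_notMem (by simp [hv])]; ring
    · simp
  unfold SimpleGraph.dartCount
  rw [sum_insert hv]
  simp only [h1, sum_add_distrib]
  have h2 : ∑ w ∈ S, (if G.Adj w v then 1 else 0) = #{u ∈ S | G.Adj v u} := by
    rw [card_filter]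
    exact sum_congr rfl fun w _ => by simp only [G.adj_comm]
  simp only [h2, SimpleGraph.irrefl, if_false]
  ring

lemma SimpleGraph.induce_insert_connected {V : Type*} (G : SimpleGraph V) {s : Set V} {v w : V}
    (hs : (G.induce s).Connected) (hw : w ∈ s) (h : G.Adj w v) :
    (G.induce (insert v s)).Connected := by
  have h2 := SimpleGraph.induce_union_connected hs.preconnected
    (SimpleGraph.induce_pair_connected_of_adj h).preconnected ⟨w, hw, by simp⟩
  have h3 : s ∪ {w, v} = insert v s := by
    ext x; simp only [Set.mem_union, Set.mem_insert_iff, Set.mem_singleton_iff]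
    constructor
    · rintro (h | rfl | rfl) <;> simp_all
    · rintro (h | h) <;> simp_all
  rwa [h3] at h2

open Classical in
/-- A vertex set spanning many edges contains a connected set `U` whose neighbourhood `N` in the
rest has large minimum degree. -/
lemma SimpleGraph.exists_connected_dense_neighborhood {V : Type*} (G : SimpleGraph V) (c : ℕ)
    (hc : 0 < c) (S : Finset V) (hS : S.Nonempty) (h : 2 * c * #S ≤ G.dartCount S) :
    ∃ U N : Finset V, U ⊆ S ∧ N ⊆ S ∧ Disjoint U N ∧ N.Nonempty ∧
      (G.induce (U : Set V)).Connected ∧ (∀ v ∈ N, ∃ u ∈ U, G.Adj u v) ∧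
      ∀ v ∈ N, c ≤ #{w ∈ N | G.Adj v w} := by
  induction hn : #S using Nat.strong_induction_on generalizing S with
  | _ n ih =>
  subst hn
  let Nb : Finset V → Finset V := fun U => {v ∈ S \ U | ∃ u ∈ U, G.Adj u v}
  let P : Finset V → Prop := fun U => (G.induce (U : Set V)).Connected ∧
    2 * c * (#(S \ U) + 1) ≤ 2 * #(Nb U) + G.dartCount (S \ U)
  obtain ⟨x, hx⟩ := hS
  have hxP : P {x} := by
    refine ⟨?_, ?_⟩
    · rw [coe_singleton]
      have : Nonempty ({x} : Set V) := ⟨⟨x, rfl⟩⟩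
      exact ⟨SimpleGraph.Preconnected.of_subsingleton⟩
    · have h1 : insert x (S \ {x}) = S := by
        rw [sdiff_singleton_eq_erase, insert_erase hx]
      have h2 : x ∉ S \ {x} := by simp
      have h3 := G.dartCount_insert h2
      have h4 : #(S \ {x}) + 1 = #S := by
        rw [← card_insert_of_notMem h2, h1]
      rw [h1] at h3
      rw [h4]
      have h5 : Nb {x} = {u ∈ S \ {x} | G.Adj x u} := by
        simp [Nb]
      rw [h5]
      omega
  obtain ⟨U, hU, hmax⟩ := exists_max_image (S.powerset.filter P) card
    ⟨{x}, by simp [hx, hxP]⟩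
  simp only [mem_filter, mem_powerset] at hU hmax
  obtain ⟨hUS, hUc, hUe⟩ := hU
  by_cases hN : (Nb U).Nonempty
  · refine ⟨U, Nb U, hUS, fun v hv => ?_, ?_, hN, hUc, fun v hv => (mem_filter.1 hv).2, ?_⟩
    · exact (mem_sdiff.1 (mem_filter.1 hv).1).1
    · rw [Finset.disjoint_left]
      intro v hv hv'
      exact (mem_sdiff.1 (mem_filter.1 hv').1).2 hv
    · intro v hv
      obtain ⟨hvS, u, hu, huv⟩ := mem_filter.1 hv
      obtain ⟨hvS, hvU⟩ := mem_sdiff.1 hvS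
      have hnot : ¬ P (insert v U) := by
        intro hP
        have := hmax (insert v U) ⟨insert_subset hvS hUS, hP⟩
        rw [card_insert_of_notMem hvU] at this
        omega
      have hcon : (G.induce ((insert v U : Finset V) : Set V)).Connected := by
        rw [coe_insert]
        exact G.induce_insert_connected hUc (by simpa using hu) huv
      have hlt : 2 * #(Nb (insert v U)) + G.dartCount (S \ insert v U)
          < 2 * c * (#(S \ insert v U) + 1) := by
        by_contra hcon'
        exact hnot ⟨hcon, not_lt.1 hcon'⟩
      have hv2 : v ∉ S \ insert v U := by simp
      have hSU : S \ U = insert v (S \ insert v U) := by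
        ext y; simp only [mem_sdiff, mem_insert]
        by_cases hy : y = v
        · subst hy; simp [hvS, hvU]
        · simp [hy]
      have hd := G.dartCount_insert hv2
      have hcard := card_insert_of_notMem hv2
      rw [← hSU] at hd hcard
      set A : Finset V := {u ∈ S \ insert v U | G.Adj v u} with hA
      have hNb : (Nb U).erase v ∪ (A \ Nb U) ⊆ Nb (insert v U) := by
        intro y hy
        simp only [mem_union, mem_erase, mem_sdiff, hA, mem_filter, mem_insert, Nb] at hy ⊢
        rcases hy with ⟨hyv, ⟨hyS, hyU⟩, z, hz, hzy⟩ | ⟨⟨⟨hyS, hyU⟩, hvy⟩, -⟩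
        · exact ⟨⟨hyS, by tauto⟩, z, Or.inr hz, hzy⟩
        · exact ⟨⟨hyS, hyU⟩, v, Or.inl rfl, hvy⟩
      have hNb' := card_le_card hNb
      rw [card_union_of_disjoint] at hNb'
      swap
      · rw [Finset.disjoint_left]
        intro y hy hy'
        exact (mem_sdiff.1 hy').2 (mem_erase.1 hy).2
      rw [card_erase_of_mem hv] at hNb'
      have hpos : 0 < #(Nb U) := card_pos.2 ⟨v, hv⟩
      have hAc : #(A \ Nb U) + #(A ∩ Nb U) = #A := card_sdiff_add_card_inter A (Nb U)
      have hAI : #(A ∩ Nb U) ≤ #{w ∈ Nb U | G.Adj v w} := by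
        apply card_le_card
        intro y hy
        simp only [mem_inter, hA, mem_filter] at hy ⊢
        exact ⟨hy.2, hy.1.2⟩
      rw [hcard] at hUe
      rw [hd] at hUe
      have hexp : 2 * c * (#(S \ insert v U) + 1 + 1)
        = 2 * c * (#(S \ insert v U) + 1) + 2 * c := by ring
      omega
  · rw [not_nonempty_iff_eq_empty] at hN
    rw [hN, card_empty] at hUe
    have hUne : U.Nonempty := by
      obtain ⟨⟨u, hu⟩⟩ := hUc.nonempty
      exact ⟨u, by simpa using hu⟩
    have hlt : #(S \ U) < #S := by
      apply card_lt_card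
      obtain ⟨u, hu⟩ := hUne
      refine ⟨sdiff_subset, fun hh => (mem_sdiff.1 (hh (hUS hu))).2 hu⟩
    have hne : (S \ U).Nonempty := by
      rw [nonempty_iff_ne_empty]
      intro he
      rw [he] at hUe
      simp [SimpleGraph.dartCount] at hUe
      omega
    obtain ⟨U', N', h1, h2, h3⟩ := ih _ hlt (S \ U) hne (by nlinarith) rfl
    exact ⟨U', N', h1.trans sdiff_subset, h2.trans sdiff_subset, h3⟩

/-- A set of `n ≥ 1` vertices spanning at least `2 ^ t * n` edges contains a `K_t` minor. -/
lemma SimpleGraph.exists_complete_minor_of_dartCount {V : Type*} (G : SimpleGraph V) (t : ℕ)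
    (S : Finset V) (hS : S.Nonempty) (h : 2 ^ (t + 1) * #S ≤ G.dartCount S) :
    ∃ f : Fin t → Set V, (∀ a, f a ⊆ S) ∧ (∀ a, (G.induce (f a)).Connected) ∧
      (Pairwise fun a b => Disjoint (f a) (f b)) ∧
      ∀ a b, a ≠ b → ∃ u ∈ f a, ∃ v ∈ f b, G.Adj u v := by
  classical
  induction t generalizing S with
  | zero => exact ⟨fun a => a.elim0, fun a => a.elim0, fun a => a.elim0, fun a => a.elim0,
      fun a => a.elim0⟩
  | succ t ih =>
    obtain ⟨U, N, hUS, hNS, hUN, hNne, hUc, hUNa, hdeg⟩ :=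
      G.exists_connected_dense_neighborhood (2 ^ (t + 1)) (by positivity) S hS
        (by rw [← pow_succ']; exact h)
    obtain ⟨f, hfN, hfc, hfd, hfa⟩ := ih N hNne (by
      unfold SimpleGraph.dartCount
      calc 2 ^ (t + 1) * #N = ∑ v ∈ N, 2 ^ (t + 1) := by rw [sum_const, smul_eq_mul, mul_comm]
        _ ≤ _ := sum_le_sum fun v hv => by convert hdeg v hv)
    have hd : ∀ a, Disjoint (U : Set V) (f a) := fun a =>
      (disjoint_coe.2 hUN).mono_right (hfN a)
    have hadj : ∀ a, ∃ u ∈ (U : Set V), ∃ v ∈ f a, G.Adj u v := by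
      intro a
      obtain ⟨⟨v, hv⟩⟩ := (hfc a).nonempty
      obtain ⟨u, hu, huv⟩ := hUNa v (by simpa using hfN a hv)
      exact ⟨u, by simpa using hu, v, hv, huv⟩
    refine ⟨Fin.cons (U : Set V) f, ?_, ?_, ?_, ?_⟩
    · refine Fin.cases ?_ fun a => ?_
      · simpa using hUS
      · simpa using (hfN a).trans (by simpa using hNS)
    · refine Fin.cases ?_ fun a => ?_
      · exact hUc
      · exact hfc a
    · refine fun a => Fin.cases ?_ (fun a => ?_) a <;> refine fun b => Fin.cases ?_ (fun b => ?_) b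
      · intro h; exact absurd rfl h
      · intro _; simpa using hd b
      · intro _; simpa using (hd a).symm
      · intro hab; simpa using hfd (fun h => hab (by rw [h]))
    · refine fun a => Fin.cases ?_ (fun a => ?_) a <;> refine fun b => Fin.cases ?_ (fun b => ?_) b
      · intro h; exact absurd rfl h
      · intro _; simpa using hadj b
      · intro _
        obtain ⟨u, hu, v, hv, huv⟩ := hadj a
        exact ⟨v, by simpa using hv, u, by simpa using hu, huv.symm⟩
      · intro hab; simpa using hfa a b (fun h => hab (by rw [h]))

/-- Branch sets along a quotient: a union of connected sets indexed by a connected vertex set of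
the quotient graph is connected. -/
lemma SimpleGraph.induce_biUnion_connected {V I : Type*} (G : SimpleGraph V) (H : SimpleGraph I)
    (A : I → Set V) (T : Set I) (hA : ∀ i ∈ T, (G.induce (A i)).Connected)
    (hH : ∀ i j, H.Adj i j → ∃ u ∈ A i, ∃ v ∈ A j, G.Adj u v)
    (hT : (H.induce T).Connected) : (G.induce (⋃ i ∈ T, A i)).Connected := by
  have hsub : ∀ i ∈ T, A i ⊆ ⋃ i ∈ T, A i := fun i hi => Set.subset_biUnion_of_mem hi
  have hin : ∀ i (hi : i ∈ T) u (hu : u ∈ A i) v (hv : v ∈ A i),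
      (G.induce (⋃ i ∈ T, A i)).Reachable ⟨u, hsub i hi hu⟩ ⟨v, hsub i hi hv⟩ := by
    intro i hi u hu v hv
    exact ((hA i hi).preconnected ⟨u, hu⟩ ⟨v, hv⟩).map (G.induceHomOfLE (hsub i hi)).toHom
  have key : ∀ i j : T, (H.induce T).Reachable i j →
      ∀ u (hu : u ∈ A i) v (hv : v ∈ A j),
      (G.induce (⋃ i ∈ T, A i)).Reachable ⟨u, hsub i i.2 hu⟩ ⟨v, hsub j j.2 hv⟩ := by
    rintro i j ⟨p⟩
    induction p with
    | nil => exact fun u hu v hv => hin _ (Subtype.prop _) u hu v hv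
    | cons hadj p ih =>
      intro u hu v hv
      obtain ⟨x, hx, y, hy, hxy⟩ := hH _ _ hadj
      refine (hin _ (Subtype.prop _) u hu x hx).trans (SimpleGraph.Reachable.trans ?_ (ih y hy v hv))
      exact SimpleGraph.Adj.reachable hxy
  obtain ⟨i⟩ := hT.nonempty
  obtain ⟨⟨u, hu⟩⟩ := (hA i i.2).nonempty
  have : Nonempty ↑(⋃ i ∈ T, A i) := ⟨⟨u, hsub i i.2 hu⟩⟩
  refine ⟨?_⟩
  rintro ⟨u, hu⟩ ⟨v, hv⟩
  obtain ⟨i, hi, hu'⟩ := Set.mem_iUnion₂.1 hu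
  obtain ⟨j, hj, hv'⟩ := Set.mem_iUnion₂.1 hv
  exact key ⟨i, hi⟩ ⟨j, hj⟩ (hT.preconnected _ _) u hu' v hv'

/-- A quotient graph of a `K_t`-minor-free graph is sparse. -/
lemma dartCount_le_of_not_graphMinor {V I : Type*} {G : SimpleGraph V} {t : ℕ}
    (hG : ¬ GraphMinor (⊤ : SimpleGraph (Fin t)) G) (H : SimpleGraph I) (A : I → Set V)
    (S : Finset I) (hA : ∀ i ∈ S, (G.induce (A i)).Connected)
    (hAd : Pairwise fun i j => Disjoint (A i) (A j))
    (hH : ∀ i j, H.Adj i j → ∃ u ∈ A i, ∃ v ∈ A j, G.Adj u v) :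
    H.dartCount S ≤ 2 ^ (t + 1) * #S := by
  rcases S.eq_empty_or_nonempty with rfl | hS
  · simp [SimpleGraph.dartCount]
  by_contra! hlt
  obtain ⟨f, hfS, hfc, hfd, hfa⟩ := H.exists_complete_minor_of_dartCount t S hS hlt.le
  refine hG ⟨fun a => ⋃ i ∈ f a, A i, fun a => ?_, fun a b hab => ?_, fun a b hab => ?_⟩
  · exact G.induce_biUnion_connected H A (f a) (fun i hi => hA i (hfS a hi)) hH (hfc a)
  · simp only [Set.disjoint_iUnion_left, Set.disjoint_iUnion_right]
    intro i hi j hj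
    exact hAd fun h => Set.disjoint_left.1 (hfd hab) hj (h ▸ hi)
  · obtain ⟨i, hi, j, hj, hij⟩ := hfa a b hab
    obtain ⟨u, hu, v, hv, huv⟩ := hH i j hij
    exact ⟨u, Set.mem_biUnion hi hu, v, Set.mem_biUnion hj hv, huv⟩

end Minors

section Support

lemma SimpleGraph.Adj.dist_le_add_one {V : Type*} {G : SimpleGraph V} {x y z : V}
    (h : G.Adj x y) : G.dist x z ≤ G.dist y z + 1 := by
  have h1 := h.reachable.dist_triangle_left z
  rw [SimpleGraph.dist_eq_one_iff_adj.2 h] at h1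
  omega

lemma SimpleGraph.Reachable.exists_adj_dist_add_one {V : Type*} {G : SimpleGraph V} {x z : V}
    (h : G.Reachable x z) (hne : x ≠ z) : ∃ y, G.Adj x y ∧ G.dist x z = G.dist y z + 1 := by
  obtain ⟨p, hp⟩ := h.exists_walk_length_eq_dist
  cases p with
  | nil => exact absurd rfl hne
  | @cons _ y _ hxy q =>
    refine ⟨y, hxy, le_antisymm hxy.dist_le_add_one ?_⟩
    rw [← hp, SimpleGraph.Walk.length_cons]
    have := SimpleGraph.dist_le q
    omega

/-- The cell of `i` in the additively weighted Voronoi diagram with sites `c i` and weights `s i`,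
ties being broken by `rank`. -/
def SimpleGraph.voronoiCell {V I : Type*} (G : SimpleGraph V) (S : Finset I) (c : I → V)
    (s rank : I → ℕ) (i : I) : Set V :=
  {y | i ∈ S ∧ G.Reachable y (c i) ∧ ∀ k ∈ S, G.Reachable y (c k) →
    G.dist y (c i) + s i < G.dist y (c k) + s k ∨
      (G.dist y (c i) + s i = G.dist y (c k) + s k ∧ rank i ≤ rank k)}

section Voronoi

variable {V I : Type*} {G : SimpleGraph V} {S : Finset I} {c : I → V} {s rank : I → ℕ}

lemma SimpleGraph.voronoiCell_disjoint (hr : Function.Injective rank) :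
    Pairwise fun i j => Disjoint (G.voronoiCell S c s rank i) (G.voronoiCell S c s rank j) := by
  intro i j hij
  rw [Set.disjoint_left]
  rintro y ⟨hi, hyi, h1⟩ ⟨hj, hyj, h2⟩
  have h3 := h1 j hj hyj
  have h4 := h2 i hi hyi
  exact hij (hr (by omega))

lemma SimpleGraph.voronoiCell_step {i : I} {x y : V} (hx : x ∈ G.voronoiCell S c s rank i)
    (hxy : G.Adj x y) (hd : G.dist x (c i) = G.dist y (c i) + 1) :
    y ∈ G.voronoiCell S c s rank i := by
  obtain ⟨hi, hxi, h⟩ := hx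
  refine ⟨hi, hxy.symm.reachable.trans hxi, fun k hk hyk => ?_⟩
  have h1 := h k hk (hxy.reachable.trans hyk)
  have h2 := hxy.dist_le_add_one (z := c k)
  omega

lemma SimpleGraph.exists_mem_voronoiCell {j : I} {x : V} (hj : j ∈ S)
    (hx : G.Reachable x (c j)) : ∃ i, x ∈ G.voronoiCell S c s rank i := by
  classical
  obtain ⟨i, hi, hmin⟩ := exists_min_image {i ∈ S | G.Reachable x (c i)}
    (fun i => toLex (G.dist x (c i) + s i, rank i)) ⟨j, by simp [hj, hx]⟩
  obtain ⟨hiS, hxi⟩ := mem_filter.1 hi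
  refine ⟨i, hiS, hxi, fun k hk hxk => ?_⟩
  simpa [Prod.Lex.toLex_le_toLex] using hmin k (mem_filter.2 ⟨hk, hxk⟩)

lemma SimpleGraph.center_mem_voronoiCell
    (hnd : ∀ i ∈ S, ∀ k ∈ S, i ≠ k → G.Reachable (c i) (c k) → s i < G.dist (c i) (c k) + s k)
    {i : I} (hi : i ∈ S) : c i ∈ G.voronoiCell S c s rank i := by
  refine ⟨hi, .rfl, fun k hk hik => ?_⟩
  rw [SimpleGraph.dist_self]
  rcases eq_or_ne i k with rfl | h
  · right; simp
  · have := hnd i hi k hk h hik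
    left; omega

lemma SimpleGraph.voronoiCell_connected {i : I} (hi : c i ∈ G.voronoiCell S c s rank i) :
    (G.induce (G.voronoiCell S c s rank i)).Connected := by
  have key : ∀ n, ∀ y (hy : y ∈ G.voronoiCell S c s rank i), G.dist y (c i) = n →
      (G.induce (G.voronoiCell S c s rank i)).Reachable ⟨c i, hi⟩ ⟨y, hy⟩ := by
    intro n
    induction n with
    | zero =>
      intro y hy h0
      obtain rfl := hy.2.1.dist_eq_zero_iff.1 h0
      exact .rfl
    | succ n ih =>
      intro y hy hn
      have hne : y ≠ c i := by
        rintro h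
        rw [h, SimpleGraph.dist_self] at hn
        omega
      obtain ⟨z, hyz, hd⟩ := hy.2.1.exists_adj_dist_add_one hne
      refine (ih z (SimpleGraph.voronoiCell_step hy hyz hd) (by omega)).trans ?_
      exact SimpleGraph.Adj.reachable hyz.symm
  rw [SimpleGraph.connected_iff_exists_forall_reachable]
  exact ⟨⟨c i, hi⟩, fun y => key _ y.1 y.2 rfl⟩

/-- On a geodesic from `x` to the site `c j` one enters the cell of `j` from the cell of a site
that is at least as close to `x` as `j` is. -/
lemma SimpleGraph.exists_adj_voronoiCell
    (hnd : ∀ i ∈ S, ∀ k ∈ S, i ≠ k → G.Reachable (c i) (c k) → s i < G.dist (c i) (c k) + s k)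
    {j : I} (hj : j ∈ S) {x : V} (hx : G.Reachable x (c j))
    (hxj : x ∉ G.voronoiCell S c s rank j) :
    ∃ k, k ≠ j ∧ G.Reachable x (c k) ∧ G.dist x (c k) + s k ≤ G.dist x (c j) + s j ∧
      ∃ u ∈ G.voronoiCell S c s rank k, ∃ v ∈ G.voronoiCell S c s rank j, G.Adj u v := by
  have key : ∀ n, ∀ y, G.Reachable x y → G.dist y (c j) = n →
      G.dist x y + G.dist y (c j) ≤ G.dist x (c j) → y ∉ G.voronoiCell S c s rank j →
      ∃ k, k ≠ j ∧ G.Reachable x (c k) ∧ G.dist x (c k) + s k ≤ G.dist x (c j) + s j ∧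
      ∃ u ∈ G.voronoiCell S c s rank k, ∃ v ∈ G.voronoiCell S c s rank j, G.Adj u v := by
    intro n
    induction n with
    | zero =>
      intro y hxy h0 _ hy
      obtain rfl := (hxy.symm.trans hx).dist_eq_zero_iff.1 h0
      exact absurd (SimpleGraph.center_mem_voronoiCell hnd hj) hy
    | succ n ih =>
      intro y hxy hn hle hy
      have hyj : G.Reachable y (c j) := hxy.symm.trans hx
      have hne : y ≠ c j := by
        rintro h
        rw [h, SimpleGraph.dist_self] at hn
        omega
      obtain ⟨z, hyz, hd⟩ := hyj.exists_adj_dist_add_one hne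
      by_cases hz : z ∈ G.voronoiCell S c s rank j
      · obtain ⟨k, hk⟩ := SimpleGraph.exists_mem_voronoiCell (s := s) (rank := rank) hj hyj
        have h1 := hk.2.2 j hj hyj
        have h2 := hxy.dist_triangle_left (c k)
        exact ⟨k, fun h => hy (h ▸ hk), hxy.trans hk.2.1, by omega, y, hk, z, hz, hyz⟩
      · have h3 := hxy.dist_triangle_left z
        rw [SimpleGraph.dist_eq_one_iff_adj.2 hyz] at h3
        exact ih z (hxy.trans hyz.reachable) (by omega) (by omega) hz
  exact key _ x .rfl rfl (by simp) hxj

end Voronoi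

open Classical in
/-- Weighted sites in a `K_t`-minor-free graph have a sparse support graph `F`: the sites within
a given weighted distance of a vertex span at least as many edges as a tree would. -/
lemma exists_sparse_support {V I : Type*} [Finite I] {G : SimpleGraph V} {t : ℕ}
    (hG : ¬ GraphMinor (⊤ : SimpleGraph (Fin t)) G) (S : Finset I) (c : I → V) (s : I → ℕ)
    (hnd : ∀ i ∈ S, ∀ k ∈ S, i ≠ k → G.Reachable (c i) (c k) → s i < G.dist (c i) (c k) + s k) :
    ∃ F : Finset (I × I), #F ≤ 2 ^ (t + 1) * #S ∧ (∀ i j, (i, j) ∈ F → (j, i) ∈ F) ∧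
      (∀ i j, (i, j) ∈ F → i ∈ S ∧ j ∈ S ∧ i ≠ j) ∧
      ∀ x ρ, #{i ∈ S | G.Reachable x (c i) ∧ G.dist x (c i) + s i ≤ ρ} ≤ 1 +
        #{q ∈ F | (G.Reachable x (c q.1) ∧ G.dist x (c q.1) + s q.1 ≤ ρ) ∧
          (G.Reachable x (c q.2) ∧ G.dist x (c q.2) + s q.2 ≤ ρ)} := by
  obtain ⟨n, ⟨e⟩⟩ := Finite.exists_equiv_fin I
  let rank : I → ℕ := fun i => e i
  have hr : Function.Injective rank := fun i j h => e.injective (Fin.ext h)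
  let A := G.voronoiCell S c s rank
  let H : SimpleGraph I :=
    { Adj := fun i j => i ≠ j ∧ ∃ u ∈ A i, ∃ v ∈ A j, G.Adj u v
      symm := ⟨fun i j ⟨h, u, hu, v, hv, huv⟩ => ⟨h.symm, v, hv, u, hu, huv.symm⟩⟩
      loopless := ⟨fun i h => h.1 rfl⟩ }
  have hcard := dartCount_le_of_not_graphMinor hG H A S
    (fun i hi => SimpleGraph.voronoiCell_connected (SimpleGraph.center_mem_voronoiCell hnd hi))
    (SimpleGraph.voronoiCell_disjoint hr) (fun i j h => h.2)
  refine ⟨{q ∈ S ×ˢ S | H.Adj q.1 q.2}, ?_, ?_, ?_, ?_⟩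
  · refine le_trans (le_of_eq ?_) hcard
    rw [card_filter, sum_product, SimpleGraph.dartCount]
    refine sum_congr rfl fun i _ => ?_
    rw [card_filter]
    exact sum_congr rfl fun j _ => by congr
  · intro i j h
    simp only [mem_filter, mem_product] at h ⊢
    exact ⟨h.1.symm, h.2.symm⟩
  · intro i j h
    simp only [mem_filter, mem_product] at h
    exact ⟨h.1.1, h.1.2, h.2.1⟩
  · intro x ρ
    set B : Finset I := {i ∈ S | G.Reachable x (c i) ∧ G.dist x (c i) + s i ≤ ρ} with hB
    rcases B.eq_empty_or_nonempty with h0 | ⟨j₀, hj₀⟩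
    · simp [h0]
    obtain ⟨hj₀S, hj₀x, hj₀d⟩ := mem_filter.1 hj₀
    obtain ⟨i₀, hi₀⟩ := SimpleGraph.exists_mem_voronoiCell (s := s) (rank := rank) hj₀S hj₀x
    have hnb : ∀ j ∈ B.erase i₀, ∃ k ∈ B, H.Adj j k := by
      intro j hj
      obtain ⟨hne, hjB⟩ := mem_erase.1 hj
      obtain ⟨hjS, hjx, hjd⟩ := mem_filter.1 hjB
      obtain ⟨k, hkj, hkx, hkd, u, hu, v, hv, huv⟩ := SimpleGraph.exists_adj_voronoiCell
        (rank := rank) hnd hjS hjx (fun h => Set.disjoint_left.1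
          (SimpleGraph.voronoiCell_disjoint hr hne) h hi₀)
      exact ⟨k, mem_filter.2 ⟨hu.1, hkx, hkd.trans hjd⟩, hkj.symm, v, hv, u, hu, huv.symm⟩
    choose! g hgB hgA using hnb
    have h1 : #(B.erase i₀) ≤ #{q ∈ {q ∈ S ×ˢ S | H.Adj q.1 q.2} |
        (G.Reachable x (c q.1) ∧ G.dist x (c q.1) + s q.1 ≤ ρ) ∧
          (G.Reachable x (c q.2) ∧ G.dist x (c q.2) + s q.2 ≤ ρ)} := by
      apply card_le_card_of_injOn (fun j => (j, g j))
      · intro j hj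
        have hj1 := mem_filter.1 (mem_erase.1 hj).2
        have hj2 := mem_filter.1 (hgB j hj)
        simp only [mem_coe, mem_filter, mem_product]
        exact ⟨⟨⟨hj1.1, hj2.1⟩, hgA j hj⟩, hj1.2, hj2.2⟩
      · intro j _ k _ h
        exact (Prod.mk.inj h).1
    have h2 := pred_card_le_card_erase (s := B) (a := i₀)
    omega

end Support

section Sampling

open Classical in
/-- Every finite set `S` carries a graph with at most `K * #S` darts in which every trace on `S`
of a member of `𝒜` spans at least (size minus one) darts. -/
def HasSparseSupports {I : Type*} (K : ℕ) (𝒜 : Set (Set I)) : Prop :=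
  ∀ S : Finset I, ∃ F : Finset (I × I), #F ≤ K * #S ∧ (∀ i j, (i, j) ∈ F → (j, i) ∈ F) ∧
    (∀ i j, (i, j) ∈ F → i ∈ S ∧ j ∈ S ∧ i ≠ j) ∧
    ∀ P ∈ 𝒜, #{i ∈ S | i ∈ P} ≤ 1 + #{q ∈ F | q.1 ∈ P ∧ q.2 ∈ P}

/-- The pair `{i, j}` is the trace on `S` of a member of `𝒜`. -/
def IsPairTrace {I : Type*} (𝒜 : Set (Set I)) (S : Finset I) (i j : I) : Prop :=
  i ≠ j ∧ ∃ P ∈ 𝒜, ∀ k ∈ S, k ∈ P ↔ k = i ∨ k = j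

open Classical in
lemma HasSparseSupports.card_isPairTrace_le {I : Type*} {K : ℕ} {𝒜 : Set (Set I)}
    (h : HasSparseSupports K 𝒜) (S : Finset I) :
    #{q ∈ S ×ˢ S | IsPairTrace 𝒜 S q.1 q.2} ≤ K * #S := by
  obtain ⟨F, hF, hsymm, hmem, hP⟩ := h S
  refine (card_le_card ?_).trans hF
  rintro ⟨i, j⟩ hq
  simp only [mem_filter, mem_product] at hq
  obtain ⟨⟨hi, hj⟩, hij, P, hP𝒜, htr⟩ := hq
  have h1 := hP P hP𝒜
  have h2 : {k ∈ S | k ∈ P} = {i, j} := by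
    ext k
    simp only [mem_filter, mem_insert, mem_singleton]
    constructor
    · rintro ⟨hk, hkP⟩; exact (htr k hk).1 hkP
    · rintro (rfl | rfl)
      · exact ⟨hi, (htr k hi).2 (Or.inl rfl)⟩
      · exact ⟨hj, (htr k hj).2 (Or.inr rfl)⟩
  rw [h2, card_pair hij] at h1
  have h3 : 0 < #{q ∈ F | q.1 ∈ P ∧ q.2 ∈ P} := by omega
  obtain ⟨⟨a, b⟩, hab⟩ := card_pos.1 h3
  simp only [mem_filter] at hab
  obtain ⟨habF, haP, hbP⟩ := hab
  obtain ⟨haS, hbS, hne⟩ := hmem a b habF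
  rcases (htr a haS).1 haP with rfl | rfl <;> rcases (htr b hbS).1 hbP with rfl | rfl
  · exact absurd rfl hne
  · exact habF
  · exact hsymm _ _ habF
  · exact absurd rfl hne

variable {I : Type*} [Fintype I]

open Classical in
/-- The probability that the random set containing each `i` independently with probability `p i`
equals `S`. -/
noncomputable def sampleProb (p : I → ℝ) (S : Finset I) : ℝ :=
  ∏ i, if i ∈ S then p i else 1 - p i

lemma sampleProb_nonneg {p : I → ℝ} (h0 : ∀ i, 0 ≤ p i) (h1 : ∀ i, p i ≤ 1) (S : Finset I) :
    0 ≤ sampleProb p S :=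
  prod_nonneg fun i _ => by split_ifs <;> [exact h0 i; linarith [h1 i]]

lemma sum_sampleProb (p : I → ℝ) : ∑ S, sampleProb p S = 1 := by
  classical
  have h := prod_add p (fun i => 1 - p i) univ
  simp only [add_sub_cancel, prod_const_one, powerset_univ] at h
  rw [h]
  refine sum_congr rfl fun S _ => ?_
  rw [sampleProb, prod_ite]
  congr 1
  · congr 1; ext; simp
  · congr 1; ext; simp

open Classical in
lemma sum_sampleProb_mem (p : I → ℝ) (i : I) (g : Finset I → ℝ) :
    ∑ S, sampleProb p S * (if i ∈ S then g S else 0)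
      = p i * ∑ S, sampleProb p S * g (insert i S) := by
  have hsplit : ∀ f : Finset I → ℝ,
      ∑ S, f S = ∑ S with i ∉ S, (f (insert i S) + f S) := by
    intro f
    rw [sum_add_distrib, ← sum_filter_not_add_sum_filter univ (fun S => i ∉ S)]
    congr 1
    refine sum_nbij' (fun S => S.erase i) (fun S => insert i S) ?_ ?_ ?_ ?_ ?_
    · intro S hS; simp
    · intro S hS; simp
    · intro S hS
      have : i ∈ S := by simpa using hS
      exact insert_erase this
    · intro S hS
      have : i ∉ S := by simpa using hS
      exact erase_insert this
    · intro S hS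
      have : i ∈ S := by simpa using hS
      simp only [insert_erase this]
  have hins : ∀ S : Finset I, i ∉ S → sampleProb p (insert i S)
      = p i * ∏ j ∈ univ.erase i, (if j ∈ S then p j else 1 - p j) := by
    intro S hS
    rw [sampleProb, ← mul_prod_erase _ _ (mem_univ i)]
    congr 1
    · simp
    · refine prod_congr rfl fun j hj => ?_
      have : j ≠ i := (mem_erase.1 hj).1
      simp [this]
  have hnot : ∀ S : Finset I, i ∉ S → sampleProb p S
      = (1 - p i) * ∏ j ∈ univ.erase i, (if j ∈ S then p j else 1 - p j) := by
    intro S hS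
    rw [sampleProb, ← mul_prod_erase _ _ (mem_univ i)]
    congr 1
    simp [hS]
  rw [hsplit, hsplit, mul_sum]
  refine sum_congr rfl fun S hS => ?_
  have hS' : i ∉ S := by simpa using hS
  rw [hins S hS', hnot S hS']
  simp only [mem_insert_self, if_true, hS', if_false, insert_idem]
  ring

open Classical in
lemma sum_sampleProb_ite (p : I → ℝ) (i : I) :
    ∑ S, sampleProb p S * (if i ∈ S then 1 else 0) = p i := by
  rw [sum_sampleProb_mem p i (fun _ => 1)]
  simp [sum_sampleProb]

lemma sum_sampleProb_card (p : I → ℝ) : ∑ S, sampleProb p S * (#S : ℝ) = ∑ i, p i := by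
  classical
  calc ∑ S, sampleProb p S * (#S : ℝ)
      = ∑ S, ∑ i, sampleProb p S * (if i ∈ S then 1 else 0) := by
        refine sum_congr rfl fun S _ => ?_
        rw [← mul_sum, ← sum_filter, filter_univ_mem, card_eq_sum_ones]
        push_cast; rfl
    _ = _ := by
        rw [sum_comm]
        exact sum_congr rfl fun i _ => sum_sampleProb_ite p i

open Classical in
/-- The Clarkson–Shor sampling bound for pair traces. -/
lemma HasSparseSupports.sum_pairs_le {K : ℕ} {𝒜 : Set (Set I)} (h : HasSparseSupports K 𝒜)
    {p : I → ℝ} (h0 : ∀ i, 0 ≤ p i) (h1 : ∀ i, p i ≤ 1) :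
    ∑ i, ∑ j, p i * p j * ∑ S, sampleProb p S *
      (if IsPairTrace 𝒜 (insert i (insert j S)) i j then 1 else 0) ≤ K * ∑ i, p i := by
  calc _ = ∑ i, ∑ j, ∑ S, sampleProb p S *
        (if i ∈ S then if j ∈ S then if IsPairTrace 𝒜 S i j then (1 : ℝ) else 0 else 0 else 0) := by
        refine sum_congr rfl fun i _ => sum_congr rfl fun j _ => ?_
        rw [sum_sampleProb_mem p i
          (fun S => if j ∈ S then if IsPairTrace 𝒜 S i j then (1 : ℝ) else 0 else 0)]
        rw [mul_assoc]
        congr 1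
        rcases eq_or_ne i j with rfl | hij
        · simp [IsPairTrace]
        rw [← sum_sampleProb_mem p j
          (fun S => if IsPairTrace 𝒜 (insert i S) i j then (1 : ℝ) else 0)]
        refine sum_congr rfl fun S _ => ?_
        have : j ∈ insert i S ↔ j ∈ S := by simp [hij.symm]
        simp only [this]
    _ = ∑ S, sampleProb p S * (#{q ∈ S ×ˢ S | IsPairTrace 𝒜 S q.1 q.2} : ℝ) := by
        rw [sum_congr rfl fun i _ => sum_comm, sum_comm]
        refine sum_congr rfl fun S _ => ?_
        rw [sum_congr rfl fun i _ => (mul_sum _ _ _).symm, ← mul_sum]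
        congr 1
        rw [card_filter, sum_product]
        push_cast
        rw [← sum_filter_add_sum_filter_not univ (fun i => i ∈ S)]
        rw [filter_univ_mem, sum_eq_zero (s := {i | i ∉ S}), add_zero]
        · refine sum_congr rfl fun i hi => ?_
          simp only [hi, if_true]
          rw [← sum_filter, filter_univ_mem]
        · intro i hi
          have : i ∉ S := by simpa using hi
          simp [this]
    _ ≤ ∑ S, sampleProb p S * (K * (#S : ℝ)) := by
        refine sum_le_sum fun S _ => mul_le_mul_of_nonneg_left ?_ (sampleProb_nonneg h0 h1 S)
        exact_mod_cast h.card_isPairTrace_le S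
    _ = K * ∑ i, p i := by
        rw [← sum_sampleProb_card p, mul_sum]
        exact sum_congr rfl fun S _ => by ring

end Sampling

section FractionalMatching

variable {V I : Type*} [Fintype I]

open Classical in
/-- In a fractional packing of depth at most `1 / 2`, the intersecting pairs have small total
weight. -/
lemma HasSparseSupports.sum_not_disjoint_le {K : ℕ} {B : I → Set V}
    (h : HasSparseSupports K (Set.range fun x => {i | x ∈ B i})) {p : I → ℝ}
    (h0 : ∀ i, 0 ≤ p i) (h1 : ∀ i, p i ≤ 1) (hp : ∀ x, ∑ i with x ∈ B i, p i ≤ 1 / 2) :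
    ∑ i, p i * ∑ j with i ≠ j ∧ ¬ Disjoint (B i) (B j), p j ≤ 2 * K * ∑ i, p i := by
  have key : ∀ i j, i ≠ j ∧ ¬ Disjoint (B i) (B j) → 1 / 2 ≤ ∑ S, sampleProb p S *
      (if IsPairTrace (Set.range fun x => {i | x ∈ B i}) (insert i (insert j S)) i j
        then (1 : ℝ) else 0) := by
    rintro i j ⟨hij, hd⟩
    obtain ⟨x, hxi, hxj⟩ := Set.not_disjoint_iff.1 hd
    calc (1 / 2 : ℝ) ≤ 1 - ∑ k with x ∈ B k, p k := by linarith [hp x]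
      _ = ∑ S, sampleProb p S * (1 - ∑ k with x ∈ B k, if k ∈ S then (1 : ℝ) else 0) := by
        simp only [mul_sub, mul_one, sum_sub_distrib, sum_sampleProb, mul_sum]
        rw [sum_comm]
        congr 1
        exact sum_congr rfl fun k _ => (sum_sampleProb_ite p k).symm
      _ ≤ _ := by
        refine sum_le_sum fun S _ => mul_le_mul_of_nonneg_left ?_ (sampleProb_nonneg h0 h1 S)
        by_cases hS : ∃ k ∈ S, x ∈ B k
        · obtain ⟨k, hk, hxk⟩ := hS
          have h2 : (1 : ℝ) ≤ ∑ k with x ∈ B k, if k ∈ S then (1 : ℝ) else 0 := by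
            refine le_trans ?_ (single_le_sum (f := fun k => if k ∈ S then (1 : ℝ) else 0)
              (fun k _ => by split_ifs <;> norm_num) (mem_filter.2 ⟨mem_univ k, hxk⟩))
            simp [hk]
          have h3 : (0 : ℝ) ≤ if IsPairTrace (Set.range fun x => {i | x ∈ B i})
            (insert i (insert j S)) i j then (1 : ℝ) else 0 := by split_ifs <;> norm_num
          linarith
        · push Not at hS
          have h2 : IsPairTrace (Set.range fun x => {i | x ∈ B i}) (insert i (insert j S)) i j := by
            refine ⟨hij, _, ⟨x, rfl⟩, fun k hk => ?_⟩
            simp only [mem_insert] at hk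
            constructor
            · intro hxk
              rcases hk with hk | hk | hk
              · exact Or.inl hk
              · exact Or.inr hk
              · exact absurd hxk (hS k hk)
            · rintro (rfl | rfl)
              · exact hxi
              · exact hxj
          rw [if_pos h2]
          have h3 : (0 : ℝ) ≤ ∑ k with x ∈ B k, if k ∈ S then (1 : ℝ) else 0 :=
            sum_nonneg fun k _ => by split_ifs <;> norm_num
          linarith
  have hmain := h.sum_pairs_le h0 h1
  have hle : (1 / 2) * ∑ i, p i * ∑ j with i ≠ j ∧ ¬ Disjoint (B i) (B j), p j ≤
      ∑ i, ∑ j, p i * p j * ∑ S, sampleProb p S *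
      (if IsPairTrace (Set.range fun x => {i | x ∈ B i}) (insert i (insert j S)) i j
        then (1 : ℝ) else 0) := by
    rw [mul_sum]
    refine sum_le_sum fun i _ => ?_
    rw [mul_sum, mul_sum, sum_filter]
    refine sum_le_sum fun j _ => ?_
    have hpp := mul_nonneg (h0 i) (h0 j)
    split_ifs with hij
    · have := mul_le_mul_of_nonneg_left (key i j hij) hpp
      linarith
    · refine mul_nonneg hpp (sum_nonneg fun S _ => mul_nonneg (sampleProb_nonneg h0 h1 S) ?_)
      split_ifs <;> norm_num
  linarith

open Classical in
/-- A fractional packing of depth at most `1 / 2` can be rounded to a matching, up to a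
constant factor. -/
lemma HasSparseSupports.exists_matching {K : ℕ} {B : I → Set V}
    (h : HasSparseSupports K (Set.range fun x => {i | x ∈ B i})) (hB : ∀ i, (B i).Nonempty)
    (p : I → ℝ) (h0 : ∀ i, 0 ≤ p i) (hp : ∀ x, ∑ i with x ∈ B i, p i ≤ 1 / 2) :
    ∃ M : Finset I, (∀ i ∈ M, p i ≠ 0) ∧ (M : Set I).Pairwise (fun i j => Disjoint (B i) (B j)) ∧
      ∑ i, p i ≤ (2 * K + 1) * #M := by
  induction hn : #{i | p i ≠ 0} using Nat.strong_induction_on generalizing p with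
  | _ n ih =>
  subst hn
  have hhalf : ∀ i, p i ≤ 1 / 2 := fun i => by
    obtain ⟨x, hx⟩ := hB i
    exact (single_le_sum (f := p) (fun k _ => h0 k) (mem_filter.2 ⟨mem_univ i, hx⟩)).trans (hp x)
  by_cases hsum : ∑ i, p i ≤ 0
  · exact ⟨∅, by simp, by simp, by simpa using hsum⟩
  push Not at hsum
  obtain ⟨i, hi, hdi⟩ : ∃ i, 0 < p i ∧
      ∑ j with i ≠ j ∧ ¬ Disjoint (B i) (B j), p j ≤ 2 * K := by
    by_contra! hcon
    have h2 := h.sum_not_disjoint_le h0 (fun i => (hhalf i).trans (by norm_num)) hp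
    rw [mul_sum] at h2
    refine absurd h2 (not_le.2 (sum_lt_sum (fun i _ => ?_) ?_))
    · rcases (h0 i).eq_or_lt with h3 | h3
      · simp [← h3]
      · rw [mul_comm]
        exact mul_le_mul_of_nonneg_left (hcon i h3).le (h0 i)
    · obtain ⟨i, -, hi⟩ := exists_lt_of_sum_lt (s := univ) (f := fun _ : I => (0 : ℝ)) (g := p)
        (by simpa using hsum)
      refine ⟨i, mem_univ i, ?_⟩
      rw [mul_comm]
      exact mul_lt_mul_of_pos_left (hcon i hi) hi
  let p' : I → ℝ := fun j => if Disjoint (B i) (B j) then p j else 0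
  have hp'le : ∀ j, p' j ≤ p j := fun j => by
    simp only [p']; split_ifs <;> [exact le_rfl; exact h0 j]
  have hii : ¬ Disjoint (B i) (B i) := by
    rw [disjoint_self]; exact (hB i).ne_empty
  have hne : ∀ j, p' j ≠ 0 → p j ≠ 0 ∧ Disjoint (B i) (B j) := by
    intro j hj
    simp only [p'] at hj
    split_ifs at hj with hd
    · exact ⟨hj, hd⟩
    · exact absurd rfl hj
  obtain ⟨M, hM0, hMd, hMs⟩ := ih #{j | p' j ≠ 0} (by
      apply card_lt_card
      refine ⟨fun j hj => ?_, fun hss => ?_⟩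
      · simp only [mem_filter, mem_univ, true_and] at hj ⊢
        exact (hne j hj).1
      · have := hss (mem_filter.2 ⟨mem_univ i, hi.ne'⟩)
        simp only [mem_filter, mem_univ, true_and] at this
        exact hii (hne i this).2) p'
    (fun j => by simp only [p']; split_ifs <;> [exact h0 j; exact le_rfl])
    (fun x => (sum_le_sum fun j _ => hp'le j).trans (hp x)) rfl
  have hiM : i ∉ M := fun hiM => hii (hne i (hM0 i hiM)).2
  refine ⟨insert i M, ?_, ?_, ?_⟩
  · intro j hj
    rcases mem_insert.1 hj with rfl | hj
    · exact hi.ne'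
    · exact (hne j (hM0 j hj)).1
  · rw [coe_insert]
    refine hMd.insert fun j hj _ => ?_
    have := (hne j (hM0 j hj)).2
    exact ⟨this, this.symm⟩
  · rw [card_insert_of_notMem hiM]
    have hsplit : ∑ j, p j ≤ ∑ j, p' j +
        (p i + ∑ j with i ≠ j ∧ ¬ Disjoint (B i) (B j), p j) := by
      have hpi : p i = ∑ j, if i = j then p j else 0 := by simp
      rw [sum_filter, hpi, ← sum_add_distrib, ← sum_add_distrib]
      refine sum_le_sum fun j _ => ?_
      have := h0 j
      simp only [p']
      by_cases hd : Disjoint (B i) (B j) <;> by_cases hij : i = j <;> simp [hd, hij] <;> try linarith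
      all_goals simp_all
    have := hhalf i
    push_cast
    nlinarith

end FractionalMatching

section Transversals

variable {V I : Type*} [Fintype V] [Fintype I]

open Classical in
/-- Nets whose size is independent of the ground set. -/
lemma HasSparseSupports.exists_net {K : ℕ} {𝒜 : Set (Set V)} (h : HasSparseSupports K 𝒜)
    {μ : V → ℝ} (hμ : ∀ x, 0 ≤ μ x) {m δ : ℝ} (hm : 0 < m) (hμm : ∑ x, μ x ≤ m) (hδ : 0 < δ)
    (hδ1 : δ ≤ 1) :
    ∃ T : Finset V, (#T : ℝ) ≤ 4 * (2 * K + 1) / δ ^ 2 ∧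
      ∀ P ∈ 𝒜, δ * m ≤ ∑ x with x ∈ P, μ x → ∃ x ∈ T, x ∈ P := by
  by_contra! hcon
  set l : ℝ := (2 * K + 1) / δ ^ 2 with hl
  have hlδ : l * δ ^ 2 = 2 * K + 1 := by rw [hl]; field_simp
  have hlpos : 0 < l := by positivity
  let ρ : V → ℝ := fun x => l * μ x / m
  have hρ0 : ∀ x, 0 ≤ ρ x := fun x => by have := hμ x; positivity
  have hρs : ∑ x, ρ x ≤ l := by
    simp only [ρ]
    rw [← sum_div, ← mul_sum, div_le_iff₀ hm]
    exact mul_le_mul_of_nonneg_left hμm hlpos.le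
  let q : V → ℝ := fun x => if ρ x ≤ 1 / 2 then ρ x else 0
  have hq0 : ∀ x, 0 ≤ q x := fun x => by
    simp only [q]; split_ifs <;> [exact hρ0 x; exact le_rfl]
  have hqρ : ∀ x, q x ≤ ρ x := fun x => by
    simp only [q]; split_ifs <;> [exact le_rfl; exact hρ0 x]
  have hqh : ∀ x, q x ≤ 1 / 2 := fun x => by
    simp only [q]; split_ifs with hx <;> [exact hx; norm_num]
  have hqs : ∑ x, q x ≤ l := (sum_le_sum fun x _ => hqρ x).trans hρs
  have hq1 : ∀ x, q x ≤ 1 := fun x => (hqh x).trans (by norm_num)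
  let T₀ : Finset V := {x | ¬ ρ x ≤ 1 / 2}
  have hT₀ : (#T₀ : ℝ) ≤ 2 * l := by
    have h1 : (#T₀ : ℝ) * (1 / 2) ≤ ∑ x ∈ T₀, ρ x := by
      rw [← nsmul_eq_mul]
      exact card_nsmul_le_sum _ _ _ fun x hx => (not_le.1 (mem_filter.1 hx).2).le
    have h2 : ∑ x ∈ T₀, ρ x ≤ ∑ x, ρ x :=
      sum_le_sum_of_subset_of_nonneg (subset_univ _) fun x _ _ => hρ0 x
    linarith
  have hlocal : ∀ S : Finset V, (#S : ℝ) ≤ 2 * l → l * δ * (l * δ - 1 / 2) ≤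
      ∑ x, ∑ y, q x * q y * (if IsPairTrace 𝒜 (insert x (insert y S)) x y then 1 else 0) := by
    intro S hS
    obtain ⟨P, hP, hPm, hPT⟩ := hcon (T₀ ∪ S) (by
      have h1 : (#(T₀ ∪ S) : ℝ) ≤ #T₀ + #S := by exact_mod_cast card_union_le T₀ S
      have h2 : 4 * (2 * (K : ℝ) + 1) / δ ^ 2 = 4 * l := by rw [hl]; ring
      linarith)
    set Q : ℝ := ∑ x with x ∈ P, q x with hQ
    have hQl : l * δ ≤ Q := by
      have h1 : Q = ∑ x with x ∈ P, ρ x := by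
        refine sum_congr rfl fun x hx => ?_
        have hxT : x ∉ T₀ := fun h' => hPT x (mem_union_left _ h') (mem_filter.1 hx).2
        have : ρ x ≤ 1 / 2 := by
          by_contra h'
          exact hxT (mem_filter.2 ⟨mem_univ x, h'⟩)
        simp only [q, this, if_true]
      rw [h1]
      simp only [ρ]
      rw [← sum_div, ← mul_sum, le_div_iff₀ hm, mul_assoc]
      exact mul_le_mul_of_nonneg_left hPm hlpos.le
    have htr : ∀ x ∈ P, ∀ y ∈ P, x ≠ y → IsPairTrace 𝒜 (insert x (insert y S)) x y := by
      intro x hx y hy hxy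
      refine ⟨hxy, P, hP, fun k hk => ⟨fun hkP => ?_, ?_⟩⟩
      · simp only [mem_insert] at hk
        rcases hk with hk | hk | hk
        · exact Or.inl hk
        · exact Or.inr hk
        · exact absurd hkP (hPT k (mem_union_right _ hk))
      · rintro (rfl | rfl)
        · exact hx
        · exact hy
    have hlδ1 : 1 / 2 ≤ l * δ := by
      have hK : (0 : ℝ) ≤ K := K.cast_nonneg
      have : l * δ ^ 2 ≤ l * δ := by
        rw [sq, ← mul_assoc]
        exact mul_le_of_le_one_right (by positivity) hδ1
      linarith
    calc l * δ * (l * δ - 1 / 2) ≤ Q * (Q - 1 / 2) := by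
          apply mul_le_mul hQl (by linarith) (by linarith) (by linarith)
      _ = ∑ x with x ∈ P, q x * (Q - 1 / 2) := by rw [← sum_mul]
      _ ≤ ∑ x with x ∈ P, q x * (Q - q x) := by
          refine sum_le_sum fun x _ => mul_le_mul_of_nonneg_left ?_ (hq0 x)
          linarith [hqh x]
      _ ≤ ∑ x with x ∈ P, ∑ y, q x * q y *
            (if IsPairTrace 𝒜 (insert x (insert y S)) x y then 1 else 0) := by
          refine sum_le_sum fun x hx => ?_
          have hxP := (mem_filter.1 hx).2
          have h1 : Q - q x = ∑ y ∈ ({y | y ∈ P} : Finset V).erase x, q y := by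
            rw [hQ, ← add_sum_erase _ _ hx]; ring
          rw [h1, mul_sum]
          calc ∑ y ∈ ({y | y ∈ P} : Finset V).erase x, q x * q y
              = ∑ y ∈ ({y | y ∈ P} : Finset V).erase x, q x * q y *
                (if IsPairTrace 𝒜 (insert x (insert y S)) x y then 1 else 0) := by
                refine sum_congr rfl fun y hy => ?_
                obtain ⟨hyx, hy⟩ := mem_erase.1 hy
                rw [if_pos (htr x hxP y (mem_filter.1 hy).2 hyx.symm), mul_one]
            _ ≤ _ := by
                refine sum_le_sum_of_subset_of_nonneg (subset_univ _) fun y _ _ => ?_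
                refine mul_nonneg (mul_nonneg (hq0 x) (hq0 y)) ?_
                split_ifs <;> norm_num
      _ ≤ _ := by
          refine sum_le_sum_of_subset_of_nonneg (subset_univ _) fun x _ _ => sum_nonneg fun y _ => ?_
          refine mul_nonneg (mul_nonneg (hq0 x) (hq0 y)) ?_
          split_ifs <;> norm_num
  set C : ℝ := l * δ * (l * δ - 1 / 2) with hC
  have hCpos : 0 < C := by
    have hK : (0 : ℝ) ≤ K := K.cast_nonneg
    have : l * δ ^ 2 ≤ l * δ := by
      rw [sq, ← mul_assoc]
      exact mul_le_of_le_one_right (by positivity) hδ1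
    have : 0 < l * δ - 1 / 2 := by linarith
    positivity
  have hmain := h.sum_pairs_le hq0 hq1
  have hswap : ∑ x, ∑ y, q x * q y * ∑ S, sampleProb q S *
      (if IsPairTrace 𝒜 (insert x (insert y S)) x y then (1 : ℝ) else 0) =
      ∑ S, sampleProb q S * ∑ x, ∑ y, q x * q y *
        (if IsPairTrace 𝒜 (insert x (insert y S)) x y then 1 else 0) := by
    simp only [mul_sum]
    rw [sum_congr rfl fun x _ => sum_comm, sum_comm]
    exact sum_congr rfl fun S _ => sum_congr rfl fun x _ => sum_congr rfl fun y _ => by ring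
  have hlower : C / 2 ≤ ∑ S, sampleProb q S * ∑ x, ∑ y, q x * q y *
        (if IsPairTrace 𝒜 (insert x (insert y S)) x y then 1 else 0) := by
    calc C / 2 ≤ C * (1 - (∑ x, q x) / (2 * l)) := by
          have : (∑ x, q x) / (2 * l) ≤ 1 / 2 := by
            rw [div_le_iff₀ (by positivity)]; linarith
          nlinarith
      _ = ∑ S, sampleProb q S * (C * (1 - #S / (2 * l))) := by
          have : ∀ S, sampleProb q S * (C * (1 - #S / (2 * l))) =
              C * sampleProb q S - C / (2 * l) * (sampleProb q S * #S) := fun S => by ring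
          rw [sum_congr rfl fun S _ => this S, sum_sub_distrib, ← mul_sum, ← mul_sum,
            sum_sampleProb, sum_sampleProb_card]
          ring
      _ ≤ _ := by
          refine sum_le_sum fun S _ => mul_le_mul_of_nonneg_left ?_ (sampleProb_nonneg hq0 hq1 S)
          by_cases hS : (#S : ℝ) ≤ 2 * l
          · refine le_trans ?_ (hlocal S hS)
            have : (0 : ℝ) ≤ #S / (2 * l) := by positivity
            nlinarith
          · have h1 : 1 - (#S : ℝ) / (2 * l) ≤ 0 := by
              rw [sub_nonpos, one_le_div (by positivity)]; linarith
            refine (mul_nonpos_of_nonneg_of_nonpos hCpos.le h1).trans ?_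
            refine sum_nonneg fun x _ => sum_nonneg fun y _ => ?_
            refine mul_nonneg (mul_nonneg (hq0 x) (hq0 y)) ?_
            split_ifs <;> norm_num
  have hfin : C / 2 ≤ K * l := by
    rw [← hswap] at hlower
    exact hlower.trans (hmain.trans (mul_le_mul_of_nonneg_left hqs K.cast_nonneg))
  have h5 : l * (δ * (l * δ - 1 / 2)) ≤ l * (2 * K) := by rw [hC] at hfin; linarith
  have h6 := le_of_mul_le_mul_left h5 hlpos
  nlinarith

open Classical in
/-- A fractional transversal can be rounded to a transversal, up to a constant factor. -/
lemma HasSparseSupports.exists_transversal {K : ℕ} {B : I → Set V}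
    (hprimal : HasSparseSupports K (Set.range B))
    (hdual : HasSparseSupports K (Set.range fun x => {i | x ∈ B i}))
    {μ : V → ℝ} (hμ : ∀ x, 0 ≤ μ x) (hμ1 : ∑ x, μ x ≤ 1) {ε : ℝ} (hε : 0 < ε) :
    ∃ T : Finset V, (#T : ℝ) ≤ 256 * (2 * K + 1) * (K + 1) ^ 2 / ε ∧
      ∀ i, ε ≤ ∑ x with x ∈ B i, μ x → ∃ x ∈ T, x ∈ B i := by
  obtain ⟨n, hn⟩ := pow_unbounded_of_one_lt (1 / ε) (one_lt_two (α := ℝ))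
  rw [div_lt_iff₀ hε] at hn
  induction n generalizing ε with
  | zero =>
    refine ⟨∅, by simp; positivity, fun i hi => ?_⟩
    have h1 : ∑ x with x ∈ B i, μ x ≤ ∑ x, μ x :=
      sum_le_sum_of_subset_of_nonneg (subset_univ _) fun x _ _ => hμ x
    linarith
  | succ n ih =>
    obtain ⟨T', hT', hT'h⟩ := ih (ε := 2 * ε) (by positivity) (by rw [pow_succ] at hn; linarith)
    let w : I → I → ℝ := fun i j => ∑ x with x ∈ B i ∧ x ∈ B j, μ x
    have hwii : ∀ i, w i i = ∑ x with x ∈ B i, μ x := fun i => by simp [w]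
    have hwcomm : ∀ i j, w i j = w j i := fun i j => by simp only [w, and_comm]
    set δ : ℝ := 1 / (2 * (K + 1)) with hδ
    have hδpos : 0 < δ := by positivity
    have hKδ : K * δ ≤ 1 / 2 := by
      rw [hδ, mul_one_div, div_le_iff₀ (by positivity)]; linarith
    have hδ1 : δ ≤ 1 := by
      rw [hδ, div_le_one (by positivity)]
      have hK : (0 : ℝ) ≤ K := K.cast_nonneg
      linarith
    obtain ⟨R, hR, hmax⟩ := exists_max_image
      ((univ : Finset (Finset I)).filter fun R => (∀ i ∈ R, ε ≤ w i i ∧ w i i < 2 * ε) ∧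
        ∀ i ∈ R, ∀ j ∈ R, i ≠ j → w i j ≤ δ * ε) card ⟨∅, by simp⟩
    simp only [mem_filter, mem_univ, true_and] at hR hmax
    obtain ⟨hRw, hRd⟩ := hR
    have hRcard : (#R : ℝ) ≤ 2 / ε := by
      obtain ⟨F, hF, -, hFR, hFP⟩ := hdual R
      have h1 : (#R : ℝ) * ε ≤ ∑ i ∈ R, w i i := by
        rw [← nsmul_eq_mul]
        exact card_nsmul_le_sum _ _ _ fun i hi => (hRw i hi).1
      have h2 : ∑ i ∈ R, w i i = ∑ x, μ x * #{i ∈ R | x ∈ B i} := by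
        simp only [hwii, sum_filter]
        rw [sum_comm]
        refine sum_congr rfl fun x _ => ?_
        rw [← sum_filter, sum_const, nsmul_eq_mul, mul_comm]
      have h3 : ∑ x, μ x * #{i ∈ R | x ∈ B i} ≤
          ∑ x, μ x * (1 + #{q ∈ F | x ∈ B q.1 ∧ x ∈ B q.2}) := by
        refine sum_le_sum fun x _ => mul_le_mul_of_nonneg_left ?_ (hμ x)
        exact_mod_cast hFP _ ⟨x, rfl⟩
      have h4 : ∑ x, μ x * (1 + #{q ∈ F | x ∈ B q.1 ∧ x ∈ B q.2}) =
          ∑ x, μ x + ∑ q ∈ F, w q.1 q.2 := by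
        simp only [mul_add, mul_one, sum_add_distrib, w, sum_filter]
        congr 1
        rw [sum_comm]
        refine sum_congr rfl fun x _ => ?_
        rw [← sum_filter, sum_const, nsmul_eq_mul, mul_comm]
      have h5 : ∑ q ∈ F, w q.1 q.2 ≤ #F * (δ * ε) := by
        rw [← nsmul_eq_mul]
        refine sum_le_card_nsmul _ _ _ fun q hq => ?_
        obtain ⟨ha, hb, hab⟩ := hFR q.1 q.2 hq
        exact hRd _ ha _ hb hab
      have h6 : (#F : ℝ) * (δ * ε) ≤ K * #R * (δ * ε) :=
        mul_le_mul_of_nonneg_right (by exact_mod_cast hF) (by positivity)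
      have h7 : K * #R * (δ * ε) ≤ 1 / 2 * (#R * ε) := by
        calc K * #R * (δ * ε) = K * δ * (#R * ε) := by ring
          _ ≤ _ := mul_le_mul_of_nonneg_right hKδ (by positivity)
      rw [le_div_iff₀ hε]
      linarith
    have hnets : ∀ i, ∃ T : Finset V, i ∈ R → (#T : ℝ) ≤ 4 * (2 * K + 1) / (δ / 2) ^ 2 ∧
        ∀ j, δ * ε ≤ w i j → ∃ x ∈ T, x ∈ B j := by
      intro i
      by_cases hi : i ∈ R
      swap
      · exact ⟨∅, fun h => absurd h hi⟩
      obtain ⟨T, hT, hTh⟩ := hprimal.exists_net (μ := fun x => if x ∈ B i then μ x else 0)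
        (fun x => by split_ifs <;> [exact hμ x; exact le_rfl]) (m := 2 * ε) (δ := δ / 2)
        (by positivity) (by rw [← sum_filter, ← hwii]; exact (hRw i hi).2.le) (by positivity)
        (by linarith)
      refine ⟨T, fun _ => ⟨hT, fun j hj => hTh _ ⟨j, rfl⟩ ?_⟩⟩
      rw [← sum_filter, filter_filter]
      simp only [hwcomm i j, w] at hj
      linarith
    choose N hN using hnets
    refine ⟨T' ∪ R.biUnion N, ?_, fun j hj => ?_⟩
    · have h1 : (#(T' ∪ R.biUnion N) : ℝ) ≤ #T' + ∑ i ∈ R, (#(N i) : ℝ) := by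
        exact_mod_cast (card_union_le _ _).trans (Nat.add_le_add_left card_biUnion_le _)
      have h2 : ∑ i ∈ R, (#(N i) : ℝ) ≤ #R * (4 * (2 * K + 1) / (δ / 2) ^ 2) := by
        rw [← nsmul_eq_mul]
        exact sum_le_card_nsmul _ _ _ fun i hi => (hN i hi).1
      have h3 : 4 * (2 * K + 1) / (δ / 2) ^ 2 = 64 * (2 * (K : ℝ) + 1) * (K + 1) ^ 2 := by
        rw [hδ]; field_simp; ring
      rw [h3] at h2
      have h4 : (#R : ℝ) * (64 * (2 * (K : ℝ) + 1) * (K + 1) ^ 2) ≤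
          2 / ε * (64 * (2 * (K : ℝ) + 1) * (K + 1) ^ 2) :=
        mul_le_mul_of_nonneg_right hRcard (by positivity)
      have h5 : 256 * (2 * (K : ℝ) + 1) * (K + 1) ^ 2 / ε =
          256 * (2 * (K : ℝ) + 1) * (K + 1) ^ 2 / (2 * ε) +
            2 / ε * (64 * (2 * (K : ℝ) + 1) * (K + 1) ^ 2) := by
        field_simp; ring
      linarith
    · rcases le_or_gt (2 * ε) (∑ x with x ∈ B j, μ x) with hbig | hsmall
      · obtain ⟨x, hx, hxj⟩ := hT'h j hbig
        exact ⟨x, mem_union_left _ hx, hxj⟩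
      rw [← hwii] at hj hsmall
      obtain ⟨i, hi, hij⟩ : ∃ i ∈ R, δ * ε ≤ w i j := by
        by_cases hjR : j ∈ R
        · exact ⟨j, hjR, (mul_le_of_le_one_left hε.le hδ1).trans hj⟩
        by_contra! hcon
        have := hmax (insert j R) ⟨?_, ?_⟩
        · rw [card_insert_of_notMem hjR] at this
          omega
        · intro i hi
          rcases mem_insert.1 hi with rfl | hi
          · exact ⟨hj, hsmall⟩
          · exact hRw i hi
        · intro a ha b hb hab
          rcases mem_insert.1 ha with haj | haR <;> rcases mem_insert.1 hb with hbj | hbR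
          · exact absurd (haj.trans hbj.symm) hab
          · rw [hwcomm, haj]; exact (hcon b hbR).le
          · rw [hbj]; exact (hcon a haR).le
          · exact hRd a haR b hbR hab
      obtain ⟨x, hx, hxj⟩ := (hN i hi).2 j hij
      exact ⟨x, mem_union_right _ (mem_biUnion.2 ⟨i, hi, hx⟩), hxj⟩

open Classical in
/-- Linear programming duality for fractional transversals and fractional matchings. -/
lemma exists_fractional_transversal_or_matching [Nonempty V] (B : I → Set V) (ε : ℝ) :
    (∃ μ : V → ℝ, (∀ x, 0 ≤ μ x) ∧ ∑ x, μ x = 1 ∧ ∀ i, ε ≤ ∑ x with x ∈ B i, μ x) ∨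
      ∃ w : I → ℝ, (∀ i, 0 ≤ w i) ∧ ∑ i, w i = 1 ∧ ∀ x, ∑ i with x ∈ B i, w i ≤ ε := by
  let L : (V → ℝ) →ₗ[ℝ] (I → ℝ) := LinearMap.pi fun i => ∑ x with x ∈ B i, LinearMap.proj x
  have hL : ∀ μ i, L μ i = ∑ x with x ∈ B i, μ x := fun μ i => by simp [L]
  let s : Set (I → ℝ) := Set.univ.pi fun _ => Set.Ioi ε
  have hs : ∀ v, v ∈ s ↔ ∀ i, ε < v i := fun v => by simp [s]
  have hsc : Convex ℝ s := convex_pi fun i _ => convex_Ioi ε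
  have hso : IsOpen s := isOpen_set_pi Set.finite_univ fun i _ => isOpen_Ioi
  have htc : Convex ℝ (L '' stdSimplex ℝ V) := (convex_stdSimplex ℝ V).linear_image L
  by_cases hdisj : Disjoint s (L '' stdSimplex ℝ V)
  swap
  · left
    obtain ⟨v, hv, μ, hμ, rfl⟩ := Set.not_disjoint_iff.1 hdisj
    refine ⟨μ, hμ.1, hμ.2, fun i => ?_⟩
    rw [← hL]
    exact ((hs _).1 hv i).le
  right
  obtain ⟨f, u, hfs, hft⟩ := geometric_hahn_banach_open hsc hso htc hdisj
  let g : I → ℝ := fun i => -f (Pi.single i 1)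
  have hfg : ∀ v, f v = -∑ i, v i * g i := by
    intro v
    conv_lhs => rw [← univ_sum_single v]
    rw [map_sum, ← sum_neg_distrib]
    refine sum_congr rfl fun i _ => ?_
    have : (Pi.single i (v i) : I → ℝ) = v i • Pi.single i 1 := by
      rw [← Pi.single_smul, smul_eq_mul, mul_one]
    rw [this, map_smul, smul_eq_mul]
    simp [g]
  have hpos : ∀ η > 0, -u < (ε + η) * ∑ i, g i := by
    intro η hη
    have h1 := hfs (fun _ => ε + η) ((hs _).2 fun i => by linarith)
    rw [hfg, ← mul_sum] at h1
    linarith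
  have hle : -u ≤ ε * ∑ i, g i := by
    by_contra! hlt
    rcases le_or_gt (∑ i, g i) 0 with h0 | h0
    · have := hpos 1 one_pos
      nlinarith
    · have h1 := hpos ((-u - ε * ∑ i, g i) / ∑ i, g i) (div_pos (by linarith) h0)
      rw [add_mul, div_mul_cancel₀ _ h0.ne'] at h1
      linarith
  have hg0 : ∀ i, 0 ≤ g i := by
    intro i
    by_contra! hi
    set X : ℝ := ((ε + 1) * ∑ j, g j + u) / (-g i) with hX
    have hXpos : 0 < X := div_pos (by linarith [hpos 1 one_pos]) (by linarith)
    have h1 := hfs (fun j => ε + 1 + if j = i then X else 0) ((hs _).2 fun j => by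
      split_ifs <;> linarith)
    rw [hfg] at h1
    simp only [add_mul _ _ (g _), sum_add_distrib, ← mul_sum, ite_mul, zero_mul, sum_ite_eq',
      mem_univ, if_true] at h1
    have h2 : X * g i = -((ε + 1) * ∑ j, g j + u) := by
      have := hi.ne
      rw [hX]; field_simp
    rw [h2] at h1
    linarith
  have hx : ∀ x, ∑ i with x ∈ B i, g i ≤ -u := by
    intro x
    have h1 := hft _ ⟨Pi.single x 1, single_mem_stdSimplex ℝ x, rfl⟩
    rw [hfg] at h1
    have h2 : ∑ i, L (Pi.single x 1) i * g i = ∑ i with x ∈ B i, g i := by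
      rw [sum_filter]
      refine sum_congr rfl fun i _ => ?_
      rw [hL]
      by_cases hxi : x ∈ B i <;> simp [hxi, Pi.single_apply]
    linarith
  have hsum : 0 < ∑ i, g i := by
    obtain ⟨x⟩ := ‹Nonempty V›
    have h1 : 0 ≤ -u := (sum_nonneg fun i _ => hg0 i).trans (hx x)
    refine (sum_nonneg fun i _ => hg0 i).lt_of_ne fun h0 => ?_
    have := hpos 1 one_pos
    rw [← h0] at this
    linarith
  refine ⟨fun i => g i / ∑ j, g j, fun i => div_nonneg (hg0 i) hsum.le, ?_, fun x => ?_⟩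
  · rw [← sum_div, div_self hsum.ne']
  · rw [← sum_div, div_le_iff₀ hsum]
    exact (hx x).trans hle

/-- Hypergraphs for which both the vertices and the hyperedges have sparse support graphs have
the Erdős–Pósa property with a linear bound. -/
lemma HasSparseSupports.exists_transversal_le_of_matching_le [Nonempty V] {K : ℕ} {B : I → Set V}
    (hprimal : HasSparseSupports K (Set.range B))
    (hdual : HasSparseSupports K (Set.range fun x => {i | x ∈ B i}))
    (hB : ∀ i, (B i).Nonempty) (n : ℕ)
    (hn : ∀ M : Finset I, (M : Set I).Pairwise (fun i j => Disjoint (B i) (B j)) → #M ≤ n) :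
    ∃ T : Finset V, (∀ i, ∃ x ∈ T, x ∈ B i) ∧
      #T ≤ 512 * (2 * K + 1) ^ 2 * (K + 1) ^ 2 * (n + 1) := by
  classical
  set ε : ℝ := 1 / (2 * (2 * K + 1) * (n + 1)) with hε
  have hεpos : 0 < ε := by positivity
  rcases exists_fractional_transversal_or_matching B ε with ⟨μ, hμ, hμ1, hμB⟩ | ⟨w, hw, hw1, hwB⟩
  · obtain ⟨T, hT, hTB⟩ := hprimal.exists_transversal hdual hμ hμ1.le hεpos
    refine ⟨T, fun i => hTB i (hμB i), ?_⟩
    have h1 : 256 * (2 * (K : ℝ) + 1) * (K + 1) ^ 2 / ε =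
        512 * (2 * K + 1) ^ 2 * (K + 1) ^ 2 * (n + 1) := by
      rw [hε]; field_simp; ring
    rw [h1] at hT
    exact_mod_cast hT
  · obtain ⟨M, -, hM, hMs⟩ := hdual.exists_matching hB (fun i => w i / (2 * ε))
      (fun i => div_nonneg (hw i) (by positivity)) (fun x => by
        rw [← sum_div, div_le_iff₀ (by positivity)]
        linarith [hwB x])
    exfalso
    rw [← sum_div, hw1] at hMs
    have h1 : 1 / (2 * ε) = (2 * (K : ℝ) + 1) * (n + 1) := by
      rw [hε]; field_simp
    rw [h1] at hMs
    have h2 := le_of_mul_le_mul_left hMs (by positivity)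
    have h3 : n + 1 ≤ #M := by exact_mod_cast h2
    have := hn M hM
    omega

end Transversals

section Balls

variable {V I : Type*} {G : SimpleGraph V} {t : ℕ}

lemma hasSparseSupports_gBall [Finite V] (hG : ¬ GraphMinor (⊤ : SimpleGraph (Fin t)) G)
    (c : I → V) (r : I → ℕ) :
    HasSparseSupports (2 ^ (t + 1)) (Set.range fun i => G.gBall (c i) (r i)) := by
  classical
  intro S
  obtain ⟨F, hF, hsymm, hmem, hP⟩ := exists_sparse_support hG S id (fun _ => 0)
    fun i _ k _ hik hreach => by simpa using hreach.pos_dist_of_ne hik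
  refine ⟨F, hF, hsymm, hmem, ?_⟩
  rintro _ ⟨i, rfl⟩
  convert hP (c i) (r i) using 4 <;> exact Iff.rfl

lemma hasSparseSupports_dual_gBall [Finite I] (hG : ¬ GraphMinor (⊤ : SimpleGraph (Fin t)) G)
    (c : I → V) (r : I → ℕ)
    (hanti : ∀ i k, G.gBall (c i) (r i) ⊆ G.gBall (c k) (r k) → i = k) :
    HasSparseSupports (2 ^ (t + 1)) (Set.range fun x => {i | x ∈ G.gBall (c i) (r i)}) := by
  classical
  intro S
  obtain ⟨R, hR⟩ := (Set.finite_range r).bddAbove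
  have hrR : ∀ i, r i ≤ R := fun i => hR ⟨i, rfl⟩
  obtain ⟨F, hF, hsymm, hmem, hP⟩ := exists_sparse_support hG S c (fun i => R - r i) <| by
    intro i _ k _ hik hreach
    by_contra! hle
    refine hik (hanti i k fun u hu => ⟨hreach.symm.trans hu.1, ?_⟩)
    have h1 : G.dist (c k) u ≤ G.dist (c k) (c i) + G.dist (c i) u :=
      hreach.symm.dist_triangle_left u
    rw [SimpleGraph.dist_comm (u := c k) (v := c i)] at h1
    have := hu.2
    have := hrR i
    have := hrR k
    omega
  refine ⟨F, hF, hsymm, hmem, ?_⟩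
  rintro _ ⟨x, rfl⟩
  have hball : ∀ i, x ∈ G.gBall (c i) (r i) ↔
      G.Reachable x (c i) ∧ G.dist x (c i) + (R - r i) ≤ R := by
    intro i
    have := hrR i
    rw [SimpleGraph.dist_comm]
    exact and_congr ⟨fun h => h.symm, fun h => h.symm⟩ (by omega)
  have h1 := hP x R
  simp only [← hball] at h1
  convert h1 using 4 <;> exact Iff.rfl

end Balls

section Numbers

variable {V : Type*} [Fintype V]

lemma card_le_matchingNumber {E : Set (Set V)} {M : Finset (Set V)} (hM : (M : Set (Set V)) ⊆ E)
    (hd : (M : Set (Set V)).Pairwise Disjoint) : #M ≤ matchingNumber E := by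
  classical
  refine le_csSup ⟨Fintype.card (Set V), ?_⟩ ⟨M, hM, hd, rfl⟩
  rintro _ ⟨N, -, -, rfl⟩
  exact card_le_univ N

lemma transversalNumber_le_card {E : Set (Set V)} {T : Finset V} (hT : ∀ e ∈ E, ∃ v ∈ T, v ∈ e) :
    transversalNumber E ≤ #T :=
  Nat.sInf_le ⟨T, hT, rfl⟩

lemma IsBallHypergraph.transversalNumber_le {G : SimpleGraph V} {E : Set (Set V)} {t : ℕ}
    (hE : IsBallHypergraph G E) (hG : ¬ GraphMinor (⊤ : SimpleGraph (Fin t)) G) :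
    transversalNumber E ≤
      1024 * (2 * 2 ^ (t + 1) + 1) ^ 2 * (2 ^ (t + 1) + 1) ^ 2 * matchingNumber E := by
  classical
  rcases E.eq_empty_or_nonempty with rfl | ⟨e₀, he₀⟩
  · exact (transversalNumber_le_card (T := ∅) (by simp)).trans (by simp)
  have : Nonempty V := ⟨(hE e₀ he₀).choose⟩
  choose! c r hcr using hE
  have hcenter : ∀ e ∈ E, c e ∈ e := by
    intro e he
    have h1 : c e ∈ G.gBall (c e) (r e) := ⟨SimpleGraph.Reachable.refl _, by simp⟩
    rwa [← hcr e he] at h1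
  let I : Type _ := {e : Set V // Minimal (· ∈ E) e}
  have hI : ∀ i : I, (i : Set V) = G.gBall (c i) (r i) := fun i => hcr i i.2.prop
  have hanti : ∀ i k : I, G.gBall (c i) (r i) ⊆ G.gBall (c k) (r k) → i = k := by
    intro i k h
    rw [← hI, ← hI] at h
    exact Subtype.ext (k.2.eq_of_subset i.2.prop h)
  have hpos : 1 ≤ matchingNumber E :=
    card_le_matchingNumber (M := {e₀}) (by simpa using he₀) (by simp)
  obtain ⟨T, hT, hTc⟩ := HasSparseSupports.exists_transversal_le_of_matching_le
    (hasSparseSupports_gBall hG (fun i : I => c i) fun i => r i)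
    (hasSparseSupports_dual_gBall hG (fun i : I => c i) (fun i => r i) hanti)
    (fun i => ⟨c i, hI i ▸ hcenter i i.2.prop⟩) (matchingNumber E) (fun M hM => by
      rw [← card_map (Function.Embedding.subtype _)]
      refine card_le_matchingNumber ?_ ?_
      · intro e he
        obtain ⟨i, -, rfl⟩ := mem_map.1 (mem_coe.1 he)
        exact i.2.prop
      · intro a ha b hb hab
        obtain ⟨i, hi, rfl⟩ := mem_map.1 (mem_coe.1 ha)
        obtain ⟨k, hk, rfl⟩ := mem_map.1 (mem_coe.1 hb)
        have h1 := hM hi hk fun h => hab (h ▸ rfl)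
        simp only [← hI] at h1
        exact h1)
  refine (transversalNumber_le_card (T := T) fun e he => ?_).trans (hTc.trans ?_)
  · obtain ⟨m, hme, hm⟩ := (Set.toFinite E).exists_le_minimal he
    obtain ⟨x, hx, hxm⟩ := hT ⟨m, hm⟩
    rw [← hI] at hxm
    exact ⟨x, hx, hme hxm⟩
  · calc _ ≤ 512 * (2 * 2 ^ (t + 1) + 1) ^ 2 * (2 ^ (t + 1) + 1) ^ 2 * (2 * matchingNumber E) :=
          Nat.mul_le_mul_left _ (by omega)
      _ = _ := by ring

end Numbers

end BallHypergraphs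

/-- **Main result.** For every integer `t ≥ 1` there is a constant `c_t` such that
`τ(𝓗) ≤ c_t · ν(𝓗)` for every `K_t`-minor-free graph `G` and every ball hypergraph
`𝓗` of `G`. -/
theorem tau_le_const_mul_nu_of_Kt_minor_free :
    ∀ t : ℕ, 1 ≤ t → ∃ c : ℕ,
      ∀ (V : Type) [Fintype V] (G : SimpleGraph V) (E : Set (Set V)),
        ¬ GraphMinor (⊤ : SimpleGraph (Fin t)) G →
        IsBallHypergraph G E →
        transversalNumber E ≤ c * matchingNumber E := by
  exact fun t _ => ⟨_, fun V _ G E hG hE => hE.transversalNumber_le hG⟩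
end

section
/- For every integer t ≥ 1 there exists a constant c_t such that for every graph G with no K_t minor and every integer r ≥ 0, the minimum size of an r-dominating set of G is at most c_t times the maximum size of an r-independent set of G. -/
open Finset

/-- A set of vertices induces a connected subgraph as soon as it is nonempty and every two of its
vertices are joined by a walk inside it. -/
lemma SimpleGraph.induce_connected_of_reachable {V : Type*} {G : SimpleGraph V} {s : Set V}
    (hs : s.Nonempty)
    (h : ∀ x (hx : x ∈ s) y (hy : y ∈ s), (G.induce s).Reachable ⟨x, hx⟩ ⟨y, hy⟩) :
    (G.induce s).Connected :=
  { preconnected := fun x y => h x.1 x.2 y.1 y.2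
    nonempty := hs.to_subtype }

lemma SimpleGraph.Reachable.induce_mono {V : Type*} {G : SimpleGraph V} {s t : Set V} (hst : s ⊆ t)
    {x y : s} (h : (G.induce s).Reachable x y) :
    (G.induce t).Reachable ⟨x, hst x.2⟩ ⟨y, hst y.2⟩ :=
  h.map (SimpleGraph.induceHomOfLE G hst).toHom

/-- The minor relation is transitive. -/
lemma GraphMinor.trans {U W V : Type*} {K : SimpleGraph U} {H : SimpleGraph W} {G : SimpleGraph V}
    (hKH : GraphMinor K H) (hHG : GraphMinor H G) : GraphMinor K G := by
  obtain ⟨g, gc, gd, ga⟩ := hKH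
  obtain ⟨f, fc, fd, fa⟩ := hHG
  refine ⟨fun u => ⋃ w ∈ g u, f w, fun u => ?_, fun u₁ u₂ hu => ?_, fun u₁ u₂ hu => ?_⟩
  · have hsub : ∀ w ∈ g u, f w ⊆ ⋃ w ∈ g u, f w := fun w hw => Set.subset_biUnion_of_mem hw
    have key : ∀ a b : g u, (H.induce (g u)).Reachable a b →
        ∀ x (hx : x ∈ f a) y (hy : y ∈ f b), (G.induce (⋃ w ∈ g u, f w)).Reachable
          ⟨x, hsub a a.2 hx⟩ ⟨y, hsub b b.2 hy⟩ := by
      rintro a b ⟨p⟩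
      induction p with
      | nil =>
        intro x hx y hy
        exact ((fc _).preconnected ⟨x, hx⟩ ⟨y, hy⟩).induce_mono (hsub _ (Subtype.prop _))
      | @cons a c b hac p ih =>
        intro x hx y hy
        obtain ⟨x', hx', y', hy', hadj⟩ := fa a c hac
        have h₁ := ((fc _).preconnected ⟨x, hx⟩ ⟨x', hx'⟩).induce_mono (hsub _ a.2)
        have h₂ : (G.induce (⋃ w ∈ g u, f w)).Adj ⟨x', hsub _ a.2 hx'⟩ ⟨y', hsub _ c.2 hy'⟩ := hadj
        exact h₁.trans (h₂.reachable.trans (ih y' hy' y hy))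
    refine SimpleGraph.induce_connected_of_reachable ?_ fun x hx y hy => ?_
    · obtain ⟨w, hw⟩ := (gc u).nonempty
      obtain ⟨v, hv⟩ := (fc w).nonempty
      exact ⟨v, hsub w hw hv⟩
    · obtain ⟨a, ha, hxa⟩ := Set.mem_iUnion₂.1 hx
      obtain ⟨b, hb, hyb⟩ := Set.mem_iUnion₂.1 hy
      exact key ⟨a, ha⟩ ⟨b, hb⟩ ((gc u).preconnected _ _) x hxa y hyb
  · simp only [Set.disjoint_iUnion_left, Set.disjoint_iUnion_right]
    intro a ha b hb
    exact fd fun hab => (Set.disjoint_left.1 (gd hu)) hb (hab ▸ ha)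
  · obtain ⟨a, ha, b, hb, hab⟩ := ga u₁ u₂ hu
    obtain ⟨x, hx, y, hy, hxy⟩ := fa a b hab
    exact ⟨x, Set.mem_biUnion ha hx, y, Set.mem_biUnion hb hy, hxy⟩

/-- If `v` is adjacent to every vertex of `s`, then a complete minor of the subgraph induced by `s`
can be extended by the branch set `{v}`. -/
lemma GraphMinor.top_succ {V : Type*} {G : SimpleGraph V} {t : ℕ} {s : Set V} {v : V}
    (hv : ∀ x ∈ s, G.Adj v x) (h : GraphMinor (⊤ : SimpleGraph (Fin t)) (G.induce s)) :
    GraphMinor (⊤ : SimpleGraph (Fin (t + 1))) G := by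
  obtain ⟨f, fc, fd, fa⟩ := h
  have hvs : v ∉ s := fun h => G.irrefl (hv v h)
  have hsv : ∀ i, Disjoint {v} (Subtype.val '' f i) := by
    intro i
    rw [Set.disjoint_singleton_left]
    rintro ⟨x, -, rfl⟩
    exact hvs x.2
  have hadj : ∀ i, ∃ y ∈ Subtype.val '' f i, G.Adj v y := by
    intro i
    obtain ⟨x, hx⟩ := (fc i).nonempty
    exact ⟨x, ⟨x, hx, rfl⟩, hv x x.2⟩
  refine ⟨Fin.cons {v} fun i => Subtype.val '' f i, fun i => ?_, fun i j hij => ?_,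
    fun i j hij => ?_⟩
  · induction i using Fin.cases with
    | zero =>
      rw [Fin.cons_zero]
      refine SimpleGraph.induce_connected_of_reachable (Set.singleton_nonempty v) ?_
      rintro x rfl y rfl
      rfl
    | succ i =>
      rw [Fin.cons_succ]
      obtain ⟨x₀, hx₀⟩ := (fc i).nonempty
      refine SimpleGraph.induce_connected_of_reachable ⟨x₀, ⟨x₀, hx₀, rfl⟩⟩ ?_
      rintro _ ⟨x, hx, rfl⟩ _ ⟨y, hy, rfl⟩
      let φ : (G.induce s).induce (f i) →g G.induce (Subtype.val '' f i) :=
        { toFun := fun z => ⟨z.1.1, z.1, z.2, rfl⟩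
          map_rel' := fun h => h }
      exact ((fc i).preconnected ⟨x, hx⟩ ⟨y, hy⟩).map φ
  · induction i using Fin.cases with
    | zero =>
      induction j using Fin.cases with
      | zero => exact absurd rfl hij
      | succ j => simpa only [Fin.cons_zero, Fin.cons_succ] using hsv j
    | succ i =>
      induction j using Fin.cases with
      | zero => simpa only [Fin.cons_zero, Fin.cons_succ] using (hsv i).symm
      | succ j =>
        simp only [Fin.cons_succ]
        exact Set.disjoint_image_of_injective Subtype.val_injective
          (fd fun h => hij (congrArg Fin.succ h))
  · induction i using Fin.cases with
    | zero =>
      induction j using Fin.cases with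
      | zero => exact absurd rfl hij.ne
      | succ j =>
        simp only [Fin.cons_zero, Fin.cons_succ]
        exact ⟨v, rfl, hadj j⟩
    | succ i =>
      induction j using Fin.cases with
      | zero =>
        simp only [Fin.cons_zero, Fin.cons_succ]
        obtain ⟨y, hy, hvy⟩ := hadj i
        exact ⟨y, hy, v, rfl, hvy.symm⟩
      | succ j =>
        simp only [Fin.cons_succ]
        obtain ⟨x, hx, y, hy, hxy⟩ := fa i j fun h => hij.ne (congrArg Fin.succ h)
        exact ⟨x, ⟨x, hx, rfl⟩, y, ⟨y, hy, rfl⟩, hxy⟩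

/-- A graph map with connected fibers exhibits its image as a minor. -/
lemma GraphMinor.map_of_connected_fibers {V W : Type*} {G : SimpleGraph V} (f : V → W)
    (hf : ∀ w, (G.induce (f ⁻¹' {w})).Connected) : GraphMinor (G.map f) G := by
  refine ⟨fun w => f ⁻¹' {w}, hf, fun w₁ w₂ h => ?_, fun w₁ w₂ h => ?_⟩
  · exact Disjoint.preimage f (Set.disjoint_singleton.2 h)
  · obtain ⟨-, x, y, hxy, rfl, rfl⟩ := (SimpleGraph.map_adj' _ _ _ _).1 h
    exact ⟨x, rfl, y, rfl, hxy⟩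

/-- The map contracting the edge `ab` into the vertex `a`. -/
def contractMap {V : Type*} [DecidableEq V] {a b : V} (hab : a ≠ b) (x : V) : {x : V // x ≠ b} :=
  if h : x = b then ⟨a, hab⟩ else ⟨x, h⟩

lemma coe_contractMap {V : Type*} [DecidableEq V] {a b : V} (hab : a ≠ b) (x : V) :
    (contractMap hab x : V) = if x = b then a else x := by
  unfold contractMap
  split_ifs <;> rfl

lemma graphMinor_contract {V : Type*} [DecidableEq V] {G : SimpleGraph V} {a b : V}
    (hab : G.Adj a b) : GraphMinor (G.map (contractMap hab.ne)) G := by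
  refine GraphMinor.map_of_connected_fibers _ fun w => ?_
  have hmem : ∀ x, x ∈ contractMap hab.ne ⁻¹' {w} ↔ (if x = b then a else x) = w := by
    intro x
    rw [Set.mem_preimage, Set.mem_singleton_iff, Subtype.ext_iff, coe_contractMap]
  have hw : (w : V) ∈ contractMap hab.ne ⁻¹' {w} := by rw [hmem, if_neg w.2]
  have key : ∀ x (hx : x ∈ contractMap hab.ne ⁻¹' {w}),
      (G.induce (contractMap hab.ne ⁻¹' {w})).Reachable ⟨x, hx⟩ ⟨w, hw⟩ := by
    intro x hx
    have hx' := (hmem x).1 hx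
    split_ifs at hx' with h
    · have : (G.induce (contractMap hab.ne ⁻¹' {w})).Adj ⟨x, hx⟩ ⟨w, hw⟩ := by
        change G.Adj x w
        rw [h, ← hx']
        exact hab.symm
      exact this.reachable
    · subst hx'
      rfl
  exact SimpleGraph.induce_connected_of_reachable ⟨w, hw⟩ fun x hx y hy =>
    (key x hx).trans (key y hy).symm

open Classical in
/-- Contracting the edge `ab` destroys at most `1` edge plus one edge for every common neighbor of
`a` and `b`; here every edge is counted in both directions. -/
lemma card_adj_le_card_adj_contract {V : Type*} [Fintype V] {G : SimpleGraph V} {a b : V}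
    (hab : G.Adj a b) {H : SimpleGraph {x : V // x ≠ b}} (hH : H = G.map (contractMap hab.ne)) :
    #{p : V × V | G.Adj p.1 p.2} ≤
      #{p : {x : V // x ≠ b} × {x : V // x ≠ b} | H.Adj p.1 p.2} +
        2 * (#{x | G.Adj a x ∧ G.Adj b x} + 1) := by
  set N : Finset V := insert a (univ.filter fun x => G.Adj a x ∧ G.Adj b x) with hN
  have hNcard : #N ≤ #{x | G.Adj a x ∧ G.Adj b x} + 1 := card_insert_le _ _
  set B : Finset (V × V) := N.image (fun x => (b, x)) ∪ N.image (fun x => (x, b)) with hB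
  have hBcard : #B ≤ 2 * (#{x | G.Adj a x ∧ G.Adj b x} + 1) := by
    calc #B ≤ #(N.image fun x => (b, x)) + #(N.image fun x => (x, b)) := card_union_le _ _
      _ ≤ #N + #N := add_le_add card_image_le card_image_le
      _ ≤ _ := by omega
  have hmemB : ∀ p : V × V, p ∈ B ↔ (p.1 = b ∧ p.2 ∈ N) ∨ (p.2 = b ∧ p.1 ∈ N) := by
    rintro ⟨x, y⟩
    simp only [hB, mem_union, mem_image, Prod.mk.injEq]
    grind
  have hmemN : ∀ x, x ∈ N ↔ x = a ∨ (G.Adj a x ∧ G.Adj b x) := by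
    intro x
    simp [hN]
  have hinj : #(({p : V × V | G.Adj p.1 p.2} : Finset (V × V)) \ B) ≤
      #{p : {x : V // x ≠ b} × {x : V // x ≠ b} | H.Adj p.1 p.2} := by
    refine card_le_card_of_injOn (fun p => (contractMap hab.ne p.1, contractMap hab.ne p.2)) ?_ ?_
    · rintro ⟨x, y⟩ hp
      simp only [coe_sdiff, coe_filter, mem_univ, true_and, Set.mem_sdiff, Set.mem_ofPred_eq,
        mem_coe, hmemB, hmemN] at hp
      simp only [coe_filter, mem_univ, true_and, Set.mem_ofPred_eq, hH, SimpleGraph.map_adj']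
      refine ⟨?_, x, y, hp.1, rfl, rfl⟩
      rw [Ne, Subtype.ext_iff, coe_contractMap, coe_contractMap]
      have := hp.1.ne
      grind
    · rintro ⟨x, y⟩ hp ⟨x', y'⟩ hp' h
      simp only [coe_sdiff, coe_filter, mem_univ, true_and, Set.mem_sdiff, Set.mem_ofPred_eq,
        mem_coe, hmemB, hmemN] at hp hp'
      simp only [Prod.mk.injEq, Subtype.ext_iff, coe_contractMap] at h
      have h₁ := hp.1.ne
      have h₂ := hp'.1.ne
      have h₃ := hp.1.symm
      have h₄ := hp'.1.symm
      grind
  have := le_card_sdiff B ({p : V × V | G.Adj p.1 p.2} : Finset (V × V))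
  omega

open Classical in
/-- A weak form of **Mader's theorem**: large average degree forces a large complete minor. -/
lemma graphMinor_top_of_le_card_adj (t : ℕ) : ∀ (n : ℕ) (V : Type) [Fintype V] (G : SimpleGraph V),
    Fintype.card V = n → 0 < n → 2 ^ (t + 1) * n ≤ #{p : V × V | G.Adj p.1 p.2} →
      GraphMinor (⊤ : SimpleGraph (Fin (t + 1))) G := by
  induction t with
  | zero =>
    intro n V _ G hn hpos _
    obtain ⟨v⟩ : Nonempty V := Fintype.card_pos_iff.1 (hn ▸ hpos)
    refine ⟨fun _ => {v}, fun _ => ?_, fun i j hij => absurd (Subsingleton.elim (α := Fin 1) i j) hij,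
      fun i j hij => absurd (Subsingleton.elim (α := Fin 1) i j) hij.ne⟩
    refine SimpleGraph.induce_connected_of_reachable (Set.singleton_nonempty v) ?_
    rintro x rfl y rfl
    rfl
  | succ t ih =>
    intro n
    induction n with
    | zero => intro V _ G _ h; exact absurd h (lt_irrefl 0)
    | succ n ihn =>
      intro V _ G hn _ hcard
      by_cases hlow : ∃ a b, G.Adj a b ∧ #{x | G.Adj a x ∧ G.Adj b x} + 1 ≤ 2 ^ (t + 1)
      · obtain ⟨a, b, hab, hlow⟩ := hlow
        refine GraphMinor.trans (ihn {x : V // x ≠ b} (G.map (contractMap hab.ne)) ?_ ?_ ?_)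
          (graphMinor_contract hab)
        · rw [Fintype.card_subtype_compl, Fintype.card_subtype_eq, hn, Nat.add_sub_cancel]
        · have : 1 < Fintype.card V := Fintype.one_lt_card_iff.2 ⟨a, b, hab.ne⟩
          omega
        · have := card_adj_le_card_adj_contract hab rfl
          rw [pow_succ] at hcard ⊢
          nlinarith
      · push Not at hlow
        have hpos : 0 < #{p : V × V | G.Adj p.1 p.2} := lt_of_lt_of_le (by positivity) hcard
        obtain ⟨⟨v, w⟩, hvw⟩ := card_pos.1 hpos
        have hvw : G.Adj v w := (mem_filter.1 hvw).2
        refine GraphMinor.top_succ (s := G.neighborSet v) (fun x hx => hx)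
          (ih (Fintype.card (G.neighborSet v)) _ _ rfl (Fintype.card_pos_iff.2 ⟨w, hvw⟩) ?_)
        have h : ∀ x : G.neighborSet v, 2 ^ (t + 1) ≤ #{y : G.neighborSet v | G.Adj x y} := by
          intro x
          have h₁ := hlow v x x.2
          have h₂ : #{y | G.Adj v y ∧ G.Adj x y} ≤ #{y : G.neighborSet v | G.Adj x y} := by
            rw [← card_map (Function.Embedding.subtype (· ∈ G.neighborSet v))]
            refine card_le_card fun y hy => ?_
            obtain ⟨hy₁, hy₂⟩ := (mem_filter.1 hy).2
            exact mem_map.2 ⟨⟨y, hy₁⟩, mem_filter.2 ⟨mem_univ _, hy₂⟩, rfl⟩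
          omega
        calc 2 ^ (t + 1) * Fintype.card (G.neighborSet v)
            = ∑ x : G.neighborSet v, 2 ^ (t + 1) := by
              rw [sum_const, card_univ, smul_eq_mul, mul_comm]
          _ ≤ ∑ x : G.neighborSet v, #{y : G.neighborSet v | G.Adj x y} :=
              sum_le_sum fun x _ => h x
          _ = _ := by
              simp only [card_filter, ← univ_product_univ, sum_product]
              rfl

open Classical in
/-- A relation `R` is `D`-supported if every finite set `C` carries a graph, all of whose nonempty
sets of vertices from `C` contain a vertex of induced degree at most `D`, such that for every `x`,
in the subgraph induced by the elements of `C` related to `x`, no vertex is isolated, unless it is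
the only one. -/
def IsSupported {V : Type*} (D : ℕ) (R : V → V → Prop) : Prop :=
  ∀ C : Finset V, ∃ E : SimpleGraph V,
    (∀ S ⊆ C, S.Nonempty → ∃ u ∈ S, #{v ∈ S | E.Adj u v} ≤ D) ∧
    ∀ x, ∀ c ∈ C, ∀ c' ∈ C, c ≠ c' → R c x → R c' x → ∃ d ∈ C, R d x ∧ E.Adj c d

namespace SimpleGraph

variable {V : Type*} (G : SimpleGraph V)

/-- The Voronoi cell of `c` with respect to the set of centers `C`; ties are broken by `i`. -/
def voronoiCell_s1 (i : V → ℕ) (C : Finset V) (c : V) : Set V :=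
  {x | c ∈ C ∧ G.edist x c ≠ ⊤ ∧
    ∀ c' ∈ C, G.edist x c < G.edist x c' ∨ (G.edist x c = G.edist x c' ∧ i c ≤ i c')}

variable {G} {i : V → ℕ} {C : Finset V} {x z c c' : V}

lemma edist_le_of_mem_voronoiCell (h : x ∈ G.voronoiCell_s1 i C c) (hc' : c' ∈ C) :
    G.edist x c ≤ G.edist x c' :=
  (h.2.2 c' hc').elim le_of_lt fun h => h.1.le

lemma eq_of_mem_voronoiCell (hi : Function.Injective i) (h : x ∈ G.voronoiCell_s1 i C c)
    (h' : x ∈ G.voronoiCell_s1 i C c') : c = c' := by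
  have h₁ := h.2.2 c' h'.1
  have h₂ := h'.2.2 c h.1
  apply hi
  rcases h₁ with h₁ | h₁ <;> rcases h₂ with h₂ | h₂
  · exact absurd h₂ h₁.asymm
  · exact absurd h₂.1 h₁.ne'
  · exact absurd h₁.1 h₂.ne'
  · exact le_antisymm h₁.2 h₂.2

lemma self_mem_voronoiCell (hc : c ∈ C) : c ∈ G.voronoiCell_s1 i C c := by
  refine ⟨hc, by simp, fun c' hc' => ?_⟩
  by_cases h : c = c'
  · subst h
    exact Or.inr ⟨rfl, le_rfl⟩
  · left
    rw [edist_self]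
    exact edist_pos_of_ne h

lemma exists_mem_voronoiCell_s1 (hc : c ∈ C) (h : G.edist x c ≠ ⊤) :
    ∃ d, x ∈ G.voronoiCell_s1 i C d := by
  obtain ⟨d, hd, hmin⟩ := C.exists_min_image (fun d => toLex (G.edist x d, i d)) ⟨c, hc⟩
  have hmin' : ∀ c' ∈ C, G.edist x d < G.edist x c' ∨ (G.edist x d = G.edist x c' ∧ i d ≤ i c') :=
    fun c' hc' => Prod.Lex.toLex_le_toLex.1 (hmin c' hc')
  refine ⟨d, hd, fun htop => ?_, hmin'⟩
  rcases hmin' c hc with h' | h'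
  · rw [htop] at h'
    exact not_top_lt h'
  · exact h (h'.1 ▸ htop)

lemma mem_voronoiCell_of_edist_add_le (h : x ∈ G.voronoiCell_s1 i C c)
    (hz : G.edist x z + G.edist z c ≤ G.edist x c) : z ∈ G.voronoiCell_s1 i C c := by
  have hsum : G.edist x z + G.edist z c ≠ ⊤ := ne_top_of_le_ne_top h.2.1 hz
  have hxz : G.edist x z ≠ ⊤ := ne_top_of_le_ne_top hsum le_self_add
  have hzc : G.edist z c ≠ ⊤ := ne_top_of_le_ne_top hsum le_add_self
  refine ⟨h.1, hzc, fun c' hc' => ?_⟩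
  have htri : G.edist x c' ≤ G.edist x z + G.edist z c' := G.edist_triangle
  have hle : G.edist z c ≤ G.edist z c' := by
    have := hz.trans ((edist_le_of_mem_voronoiCell h hc').trans htri)
    exact (ENat.add_le_add_iff_left hxz).1 this
  rcases hle.lt_or_eq with hlt | heq
  · exact Or.inl hlt
  · refine Or.inr ⟨heq, ?_⟩
    rw [← heq] at htri
    rcases h.2.2 c' hc' with h' | h'
    · exact absurd (htri.trans hz) h'.not_ge
    · exact h'.2

lemma Walk.edist_add_edist_le_length {u v w : V} (p : G.Walk u v) (hw : w ∈ p.support) :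
    G.edist u w + G.edist w v ≤ p.length := by
  classical
  rw [← p.take_spec hw, Walk.length_append, Nat.cast_add]
  exact add_le_add (G.edist_le _) (G.edist_le _)

lemma induce_voronoiCell_connected (hc : c ∈ C) : (G.induce (G.voronoiCell_s1 i C c)).Connected := by
  have key : ∀ x (hx : x ∈ G.voronoiCell_s1 i C c),
      (G.induce (G.voronoiCell_s1 i C c)).Reachable ⟨x, hx⟩ ⟨c, self_mem_voronoiCell hc⟩ := by
    intro x hx
    obtain ⟨p, hp⟩ := exists_walk_of_edist_ne_top hx.2.1
    exact ⟨p.induce _ fun z hz =>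
      mem_voronoiCell_of_edist_add_le hx (hp ▸ p.edist_add_edist_le_length hz)⟩
  exact induce_connected_of_reachable ⟨c, self_mem_voronoiCell hc⟩ fun x hx y hy =>
    (key x hx).trans (key y hy).symm

variable (G) in
/-- The graph on the centers `C` in which two centers are adjacent if their Voronoi cells are. -/
def voronoiGraph (i : V → ℕ) (C : Finset V) : SimpleGraph V where
  Adj c c' := c ≠ c' ∧ ∃ x ∈ G.voronoiCell_s1 i C c, ∃ y ∈ G.voronoiCell_s1 i C c', G.Adj x y
  symm := ⟨fun _ _ ⟨hne, x, hx, y, hy, hxy⟩ => ⟨hne.symm, y, hy, x, hx, hxy.symm⟩⟩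
  loopless := ⟨fun _ h => h.1 rfl⟩

lemma graphMinor_induce_voronoiGraph (hi : Function.Injective i) {S : Set V} (hS : S ⊆ C) :
    GraphMinor ((G.voronoiGraph i C).induce S) G := by
  refine ⟨fun s => G.voronoiCell_s1 i C s, fun s => induce_voronoiCell_connected (hS s.2),
    fun s s' h => ?_, fun s s' h => h.2⟩
  refine Set.disjoint_left.2 fun x hx hx' => h ?_
  exact Subtype.ext (eq_of_mem_voronoiCell hi hx hx')

lemma exists_voronoiGraph_adj (hi : Function.Injective i) {r : ℕ} (hc : c ∈ C) (hc' : c' ∈ C)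
    (hne : c ≠ c') (hx : G.edist c x ≤ r) (hx' : G.edist c' x ≤ r) :
    ∃ d ∈ C, G.edist d x ≤ r ∧ (G.voronoiGraph i C).Adj c d := by
  classical
  obtain ⟨p, hp⟩ := exists_walk_of_edist_ne_top (ne_top_of_le_ne_top (ENat.natCast_ne_top r) hx)
  obtain ⟨q, hq⟩ := exists_walk_of_edist_ne_top (ne_top_of_le_ne_top (ENat.natCast_ne_top r) hx')
  rw [← hp] at hx
  rw [← hq] at hx'
  have hclose : ∀ a ∈ C, ∀ w : G.Walk a x, (w.length : ℕ∞) ≤ r → ∀ z ∈ w.support,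
      ∀ d, z ∈ G.voronoiCell_s1 i C d → G.edist d x ≤ r := by
    intro a ha w hw z hz d hd
    calc G.edist d x ≤ G.edist d z + G.edist z x := G.edist_triangle
      _ ≤ G.edist a z + G.edist z x := by
          gcongr
          rw [G.edist_comm (u := d), G.edist_comm (u := a)]
          exact edist_le_of_mem_voronoiCell hd ha
      _ ≤ w.length := w.edist_add_edist_le_length hz
      _ ≤ r := hw
  obtain ⟨e, he, hfst, hsnd⟩ := (p.append q.reverse).exists_boundary_dart (G.voronoiCell_s1 i C c)
    (self_mem_voronoiCell hc) fun h => hne (eq_of_mem_voronoiCell hi h (self_mem_voronoiCell hc'))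
  obtain ⟨a, ha, w, hw, hz⟩ : ∃ a ∈ C, ∃ w : G.Walk a x, (w.length : ℕ∞) ≤ r ∧ e.snd ∈ w.support := by
    have := Walk.dart_snd_mem_support_of_mem_darts _ he
    rw [Walk.mem_support_append_iff, Walk.support_reverse, List.mem_reverse] at this
    exact this.elim (fun h => ⟨c, hc, p, hx, h⟩) fun h => ⟨c', hc', q, hx', h⟩
  have htop : G.edist e.snd a ≠ ⊤ := by
    rw [edist_comm]
    exact edist_ne_top_iff_reachable.2 ⟨w.takeUntil _ hz⟩
  obtain ⟨d, hd⟩ := exists_mem_voronoiCell_s1 (i := i) ha htop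
  exact ⟨d, hd.1, hclose a ha w hw _ hz d hd, fun h => hsnd (h ▸ hd), e.fst, hfst, e.snd, hd, e.adj⟩

end SimpleGraph

/-- In a graph without a complete minor, the balls of any fixed radius have sparse supports. -/
lemma isSupported_edist_le {V : Type} [Fintype V] {G : SimpleGraph V} {t : ℕ}
    (hG : ¬ GraphMinor (⊤ : SimpleGraph (Fin (t + 1))) G) (r : ℕ) :
    IsSupported (2 ^ (t + 1)) fun u v => G.edist u v ≤ r := by
  classical
  intro C
  let i : V → ℕ := fun v => Fintype.equivFin V v
  have hi : Function.Injective i := Fin.val_injective.comp (Fintype.equivFin V).injective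
  refine ⟨G.voronoiGraph i C, fun S hS hne => ?_, fun x c hc c' hc' hne hx hx' =>
    SimpleGraph.exists_voronoiGraph_adj hi hc hc' hne hx hx'⟩
  by_contra! hdeg
  refine hG (GraphMinor.trans ?_
    (SimpleGraph.graphMinor_induce_voronoiGraph (S := S) hi (by exact_mod_cast hS)))
  refine graphMinor_top_of_le_card_adj t (Fintype.card S) S _ rfl
    (by simpa using hne.card_pos) ?_
  calc 2 ^ (t + 1) * Fintype.card S = ∑ x : S, 2 ^ (t + 1) := by
        rw [sum_const, card_univ, smul_eq_mul, mul_comm]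
    _ ≤ ∑ x : S, #{y : S | (G.voronoiGraph i C).Adj x y} := by
        refine sum_le_sum fun x _ => (hdeg x x.2).le.trans ?_
        rw [← card_map (Function.Embedding.subtype (· ∈ S))]
        refine card_le_card fun y hy => ?_
        obtain ⟨hy₁, hy₂⟩ := mem_filter.1 hy
        exact mem_map.2 ⟨⟨y, hy₁⟩, mem_filter.2 ⟨mem_univ _, hy₂⟩, rfl⟩
    _ = _ := by
        simp only [card_filter, ← univ_product_univ, sum_product]
        rfl

/-- The expectation of a product of functions of independent samples is the product of the
expectations. -/
lemma sum_pi_prod {n : ℕ} {V : Type*} [Fintype V] (f : Fin n → V → ℝ) :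
    ∑ x : Fin n → V, ∏ i, f i (x i) = ∏ i, ∑ v, f i v := by
  classical
  rw [Finset.prod_univ_sum, Fintype.piFinset_univ]

open Classical in
/-- A `D`-supported symmetric relation has polynomially many traces on any finite family of
points. -/
lemma IsSupported.card_traces_le {V α : Type*} [Fintype V] [Fintype α] {D : ℕ}
    {R : V → V → Prop} (hR : IsSupported D R) (hsymm : ∀ u v, R u v → R v u) (pt : α → V) :
    #(univ.image fun v => ({a | R v (pt a)} : Finset α)) ≤
      (D + 2) * (Fintype.card α + 1) ^ (D + 1) := by
  set 𝒜 : Finset (Finset α) := univ.image fun v => ({a | R v (pt a)} : Finset α) with h𝒜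
  have htrace : ∀ s, 𝒜.Shatters s → ∀ t ⊆ s, ∃ v, ∀ a ∈ s, R v (pt a) ↔ a ∈ t := by
    intro s hs t ht
    obtain ⟨u, hu, hsu⟩ := hs ht
    obtain ⟨v, -, rfl⟩ := mem_image.1 hu
    refine ⟨v, fun a ha => ?_⟩
    rw [← hsu]
    simp [ha]
  have hvc : 𝒜.vcDim ≤ D + 1 := by
    refine Finset.sup_le fun s hs => ?_
    rw [mem_shatterer] at hs
    have hinj : Set.InjOn pt s := by
      intro a ha b hb hab
      by_contra hne
      obtain ⟨v, hv⟩ := htrace s hs {a} (by simpa using ha)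
      have h₁ := (hv a ha).2 (mem_singleton_self a)
      rw [hab, hv b hb, mem_singleton] at h₁
      exact hne h₁.symm
    rcases s.eq_empty_or_nonempty with rfl | hne
    · simp
    obtain ⟨E, hE₁, hE₂⟩ := hR (s.image pt)
    obtain ⟨u, hu, hdeg⟩ := hE₁ _ subset_rfl (hne.image pt)
    obtain ⟨a, ha, rfl⟩ := mem_image.1 hu
    have hsub : (s.erase a).image pt ⊆ {v ∈ s.image pt | E.Adj (pt a) v} := by
      intro y hy
      obtain ⟨b, hb, rfl⟩ := mem_image.1 hy
      obtain ⟨hba, hb⟩ := mem_erase.1 hb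
      refine mem_filter.2 ⟨mem_image_of_mem _ hb, ?_⟩
      obtain ⟨v, hv⟩ := htrace s hs {a, b} (by
        intro x hx
        rcases mem_insert.1 hx with rfl | hx
        · exact ha
        · exact (mem_singleton.1 hx) ▸ hb)
      obtain ⟨d, hd, hdv, had⟩ := hE₂ v (pt a) (mem_image_of_mem _ ha) (pt b)
        (mem_image_of_mem _ hb) (fun h => hba (hinj ha hb h).symm)
        (hsymm _ _ ((hv a ha).2 (by simp))) (hsymm _ _ ((hv b hb).2 (by simp)))
      obtain ⟨e, he, rfl⟩ := mem_image.1 hd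
      have he' := (hv e he).1 (hsymm _ _ hdv)
      rcases mem_insert.1 he' with rfl | he'
      · exact absurd had (E.irrefl)
      · rwa [mem_singleton.1 he'] at had
    have hcard := card_le_card hsub
    rw [card_image_of_injOn (hinj.mono (by exact_mod_cast erase_subset a s)),
      card_erase_of_mem ha] at hcard
    omega
  calc #𝒜 ≤ #𝒜.shatterer := card_le_card_shatterer 𝒜
    _ ≤ ∑ k ∈ Iic 𝒜.vcDim, (Fintype.card α).choose k := card_shatterer_le_sum_vcDim
    _ ≤ ∑ k ∈ Iic 𝒜.vcDim, (Fintype.card α + 1) ^ (D + 1) := by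
        refine sum_le_sum fun k hk => ?_
        calc (Fintype.card α).choose k ≤ (Fintype.card α) ^ k := Nat.choose_le_pow _ _
          _ ≤ (Fintype.card α + 1) ^ k := Nat.pow_le_pow_left (Nat.le_succ _) _
          _ ≤ _ := Nat.pow_le_pow_right (Nat.succ_pos _) ((mem_Iic.1 hk).trans hvc)
    _ ≤ _ := by
        rw [sum_const, Nat.card_Iic, smul_eq_mul]
        exact Nat.mul_le_mul_right _ (by omega)

open Classical in
/-- Among the ways to split `m` pairs of points into two halves, at most a `2⁻ᵏ` fraction is such
that the first half avoids `A` and the second half hits `A` at least `k` times. -/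
lemma card_splits_le {m : ℕ} (k : ℕ) (A : Finset (Fin m × Bool)) :
    #{σ : Fin m → Bool | (∀ i, (i, σ i) ∉ A) ∧ k ≤ #{i | (i, !σ i) ∈ A}} * 2 ^ k ≤ 2 ^ m := by
  set S : Finset (Fin m → Bool) := {σ | (∀ i, (i, σ i) ∉ A) ∧ k ≤ #{i | (i, !σ i) ∈ A}} with hS
  rcases S.eq_empty_or_nonempty with hemp | ⟨σ₀, hσ₀⟩
  · simp [hemp]
  obtain ⟨-, hk⟩ := (mem_filter.1 hσ₀).2
  set J : Finset (Fin m) := {i | (i, !σ₀ i) ∈ A} with hJ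
  have hagree : ∀ σ ∈ S, ∀ i ∈ J, σ i = σ₀ i := by
    intro σ hσ i hi
    by_contra hne
    have h₁ := (mem_filter.1 hσ).2.1 i
    have h₂ := (mem_filter.1 hi).2
    have : σ i = !σ₀ i := by
      revert hne
      cases σ i <;> cases σ₀ i <;> simp
    exact h₁ (this ▸ h₂)
  have hcard : #S ≤ 2 ^ #Jᶜ := by
    have : #S ≤ #(univ : Finset (↥(Jᶜ) → Bool)) := by
      refine card_le_card_of_injOn (fun σ j => σ j) (fun _ _ => mem_univ _) ?_
      intro σ hσ τ hτ h
      funext i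
      by_cases hi : i ∈ J
      · rw [hagree σ hσ i hi, hagree τ hτ i hi]
      · exact congrFun h ⟨i, mem_compl.2 hi⟩
    simpa [card_compl] using this
  have hJm : #Jᶜ + #J = m := by
    rw [card_compl, Fintype.card_fin]
    have := card_le_univ J
    rw [Fintype.card_fin] at this
    omega
  calc #S * 2 ^ k ≤ 2 ^ #Jᶜ * 2 ^ #J :=
        Nat.mul_le_mul hcard (Nat.pow_le_pow_right two_pos hk)
    _ = 2 ^ m := by rw [← pow_add, hJm]

open Classical in
/-- If a set has probability at least `1 / Q`, then, with probability at least `1 / (2 * Q)`, at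
least `k` among `2 * Q * k` independent samples fall into the set. -/
lemma le_prob_many_samples {V : Type*} [Fintype V] {p : V → ℝ} (hp : ∀ v, 0 ≤ p v)
    (hsum : ∑ v, p v = 1) {Q k : ℕ} (hQ : 0 < Q) (hk : 0 < k) (P : V → Prop)
    (hP : 1 / (Q : ℝ) ≤ ∑ v with P v, p v) :
    1 / (2 * Q : ℝ) ≤ ∑ y : Fin (2 * Q * k) → V with k ≤ #{i | P (y i)}, ∏ i, p (y i) := by
  set m := 2 * Q * k with hm
  have htot : ∑ y : Fin m → V, ∏ i, p (y i) = 1 := by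
    rw [sum_pi_prod fun _ => p]
    simp [hsum]
  have hone : ∀ j : Fin m, ∑ y : Fin m → V, (∏ i, p (y i)) * (if P (y j) then 1 else 0) =
      ∑ v with P v, p v := by
    intro j
    have : ∀ y : Fin m → V, (∏ i, p (y i)) * (if P (y j) then (1 : ℝ) else 0) =
        ∏ i, (p (y i) * if i = j then (if P (y i) then 1 else 0) else 1) := by
      intro y
      rw [prod_mul_distrib]
      simp
    simp_rw [this]
    rw [sum_pi_prod fun i v => p v * if i = j then (if P v then 1 else 0) else 1,
      prod_eq_single j]
    · simp [sum_filter]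
    · intro i _ hij
      simp [hij, hsum]
    · simp
  have hexp : ∑ y : Fin m → V, (∏ i, p (y i)) * (#{i | P (y i)} : ℝ) =
      m * ∑ v with P v, p v := by
    simp only [card_filter, Nat.cast_sum, mul_sum, Nat.cast_ite, Nat.cast_one, Nat.cast_zero]
    rw [sum_comm]
    rw [sum_congr rfl fun j _ => hone j, sum_const, card_univ, Fintype.card_fin, nsmul_eq_mul,
      mul_sum]
  have hnn : ∀ y : Fin m → V, 0 ≤ ∏ i, p (y i) := fun y => prod_nonneg fun i _ => hp _
  have hub : ∑ y : Fin m → V, (∏ i, p (y i)) * (#{i | P (y i)} : ℝ) ≤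
      k + m * ∑ y : Fin m → V with k ≤ #{i | P (y i)}, ∏ i, p (y i) := by
    calc _ ≤ ∑ y : Fin m → V, ((∏ i, p (y i)) * k +
          m * if k ≤ #{i | P (y i)} then ∏ i, p (y i) else 0) := by
          refine sum_le_sum fun y _ => ?_
          split_ifs with h
          · have hc : (#{i | P (y i)} : ℝ) ≤ m := by
              have := card_le_univ ({i | P (y i)} : Finset (Fin m))
              rw [Fintype.card_fin] at this
              exact_mod_cast this
            nlinarith [hnn y, mul_le_mul_of_nonneg_left hc (hnn y),
              mul_nonneg (hnn y) (Nat.cast_nonneg (α := ℝ) k)]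
          · have hc : (#{i | P (y i)} : ℝ) ≤ k := by exact_mod_cast (not_le.1 h).le
            nlinarith [mul_le_mul_of_nonneg_left hc (hnn y)]
      _ = _ := by
          rw [sum_add_distrib, ← sum_mul, htot, one_mul, ← mul_sum, sum_filter]
  rw [hexp] at hub
  have hQ' : (0 : ℝ) < Q := by exact_mod_cast hQ
  have hk' : (0 : ℝ) < k := by exact_mod_cast hk
  have hmval : (m : ℝ) = 2 * Q * k := by rw [hm]; push_cast; ring
  have h₁ : 2 * (k : ℝ) ≤ m * ∑ v with P v, p v := by
    calc 2 * (k : ℝ) = m * (1 / Q) := by rw [hmval]; field_simp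
      _ ≤ _ := by gcongr
  rw [div_le_iff₀ (by positivity)]
  rw [hmval] at hub h₁
  have h₂ : (k : ℝ) * 1 ≤ k * ((∑ y : Fin m → V with k ≤ #{i | P (y i)}, ∏ i, p (y i)) * (2 * Q)) := by
    linarith
  exact le_of_mul_le_mul_left h₂ hk'

lemma exists_mul_pow_lt_two_pow (a b d : ℕ) : ∃ k, 0 < k ∧ a * (b * k + 1) ^ d < 2 ^ k := by
  have h : Filter.Tendsto (fun k : ℕ => (k : ℝ) ^ d / (2 : ℝ) ^ k) Filter.atTop (nhds 0) :=
    tendsto_pow_const_div_const_pow_of_one_lt d one_lt_two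
  have hc : (0 : ℝ) < 1 / (a * (b + 1) ^ d + 1) := by positivity
  obtain ⟨k, hk, hpos⟩ := ((h.eventually (gt_mem_nhds hc)).and (Filter.eventually_gt_atTop 0)).exists
  refine ⟨k, hpos, ?_⟩
  rw [div_lt_div_iff₀ (by positivity) (by positivity), one_mul] at hk
  have hk' : k ^ d * (a * (b + 1) ^ d + 1) < 2 ^ k := by exact_mod_cast hk
  calc a * (b * k + 1) ^ d ≤ a * ((b + 1) * k) ^ d := by gcongr; nlinarith
    _ = k ^ d * (a * (b + 1) ^ d) := by rw [mul_pow]; ring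
    _ ≤ k ^ d * (a * (b + 1) ^ d + 1) := by gcongr; omega
    _ < 2 ^ k := hk'

open Classical in
/-- The **ε-net theorem** for supported relations: some set of bounded size hits all neighborhoods
of probability at least `1 / Q`. -/
lemma exists_net (D Q : ℕ) (hQ : 0 < Q) : ∃ m : ℕ, ∀ (V : Type) [Fintype V] (R : V → V → Prop),
    IsSupported D R → (∀ u v, R u v → R v u) → ∀ p : V → ℝ, (∀ v, 0 ≤ p v) → ∑ v, p v = 1 →
      ∃ T : Finset V, #T ≤ m ∧ ∀ v, 1 / (Q : ℝ) ≤ ∑ x with R v x, p x → ∃ x ∈ T, R v x := by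
  obtain ⟨k, hk, hkbig⟩ := exists_mul_pow_lt_two_pow (2 * Q * (D + 2)) (4 * Q) (D + 1)
  refine ⟨2 * Q * k, fun V _ R hR hsymm p hp hsum => ?_⟩
  set m := 2 * Q * k with hm
  by_contra! hcon
  have hx : ∀ x : Fin m → V, ∃ v, 1 / (Q : ℝ) ≤ ∑ y with R v y, p y ∧ ∀ i, ¬ R v (x i) := by
    intro x
    obtain ⟨v, hv, hvx⟩ := hcon (univ.image x) (card_image_le.trans (by simp))
    exact ⟨v, hv, fun i => hvx _ (mem_image_of_mem _ (mem_univ i))⟩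
  choose c hc₁ hc₂ using hx
  let W : (Fin m → V) × (Fin m → V) → ℝ := fun z => (∏ i, p (z.1 i)) * ∏ i, p (z.2 i)
  have hW : ∀ z, 0 ≤ W z := fun z =>
    mul_nonneg (prod_nonneg fun i _ => hp _) (prod_nonneg fun i _ => hp _)
  have htot : ∑ x : Fin m → V, ∏ i, p (x i) = 1 := by
    rw [sum_pi_prod fun _ => p]
    simp [hsum]
  have hWtot : ∑ z, W z = 1 := by
    rw [Fintype.sum_prod_type]
    simp only [W]
    rw [← sum_mul_sum, htot, one_mul]
  let bad : (Fin m → V) × (Fin m → V) → Prop := fun z =>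
    ∃ v, (∀ i, ¬ R v (z.1 i)) ∧ k ≤ #{i | R v (z.2 i)}
  have hbad : 1 / (2 * Q : ℝ) ≤ ∑ z, W z * if bad z then 1 else 0 := by
    calc 1 / (2 * Q : ℝ) = ∑ x : Fin m → V, (∏ i, p (x i)) * (1 / (2 * Q : ℝ)) := by
          rw [← sum_mul, htot, one_mul]
      _ ≤ ∑ x : Fin m → V, (∏ i, p (x i)) *
          ∑ y : Fin m → V with k ≤ #{i | R (c x) (y i)}, ∏ i, p (y i) := by
          refine sum_le_sum fun x _ => mul_le_mul_of_nonneg_left ?_ (prod_nonneg fun i _ => hp _)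
          exact le_prob_many_samples hp hsum hQ hk _ (hc₁ x)
      _ ≤ _ := by
          rw [Fintype.sum_prod_type]
          refine sum_le_sum fun x _ => ?_
          rw [sum_filter, mul_sum]
          refine sum_le_sum fun y _ => ?_
          by_cases h : k ≤ #{i | R (c x) (y i)}
          · have hb : bad (x, y) := ⟨c x, hc₂ x, h⟩
            rw [if_pos h, if_pos hb, mul_one]
          · rw [if_neg h, mul_zero]
            exact mul_nonneg (hW _) (by split_ifs <;> norm_num)
  let pt : (Fin m → V) × (Fin m → V) → Fin m × Bool → V := fun z a =>
    if a.2 then z.2 a.1 else z.1 a.1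
  let swap : (Fin m → Bool) → (Fin m → V) × (Fin m → V) → (Fin m → V) × (Fin m → V) := fun σ z =>
    (fun i => pt z (i, σ i), fun i => pt z (i, !σ i))
  have hswap : ∀ σ, Function.Involutive (swap σ) := by
    intro σ z
    refine Prod.ext (funext fun i => ?_) (funext fun i => ?_) <;>
    · simp only [swap, pt]
      cases σ i <;> simp
  have hWswap : ∀ σ z, W (swap σ z) = W z := by
    intro σ z
    simp only [W, ← prod_mul_distrib]
    refine prod_congr rfl fun i _ => ?_
    simp only [swap, pt]
    cases σ i <;> simp [mul_comm]
  have hcount : ∀ z, #{σ | bad (swap σ z)} * 2 ^ k ≤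
      (D + 2) * (4 * Q * k + 1) ^ (D + 1) * 2 ^ m := by
    intro z
    set 𝒜 := univ.image fun v => ({a | R v (pt z a)} : Finset (Fin m × Bool)) with h𝒜
    have hsub : ({σ | bad (swap σ z)} : Finset (Fin m → Bool)) ⊆ 𝒜.biUnion fun A =>
        {σ : Fin m → Bool | (∀ i, (i, σ i) ∉ A) ∧ k ≤ #{i | (i, !σ i) ∈ A}} := by
      intro σ hσ
      obtain ⟨v, hv₁, hv₂⟩ := (mem_filter.1 hσ).2
      refine mem_biUnion.2 ⟨_, mem_image_of_mem _ (mem_univ v), mem_filter.2 ⟨mem_univ _, ?_, ?_⟩⟩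
      · intro i hi
        exact hv₁ i (mem_filter.1 hi).2
      · simpa using hv₂
    have hcα : Fintype.card (Fin m × Bool) = 4 * Q * k := by
      rw [Fintype.card_prod, Fintype.card_fin, Fintype.card_bool, hm]
      ring
    have htr : #𝒜 ≤ (D + 2) * (4 * Q * k + 1) ^ (D + 1) := by
      rw [← hcα]
      convert hR.card_traces_le hsymm (pt z)
    calc _ ≤ (∑ A ∈ 𝒜, #{σ : Fin m → Bool | (∀ i, (i, σ i) ∉ A) ∧ k ≤ #{i | (i, !σ i) ∈ A}}) *
          2 ^ k := Nat.mul_le_mul_right _ ((card_le_card hsub).trans card_biUnion_le)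
      _ ≤ ∑ A ∈ 𝒜, 2 ^ m := by
          rw [sum_mul]
          exact sum_le_sum fun A _ => card_splits_le k A
      _ ≤ _ := by
          rw [sum_const, smul_eq_mul]
          exact Nat.mul_le_mul_right _ htr
  have havg : 2 ^ m * ∑ z, W z * (if bad z then (1 : ℝ) else 0) =
      ∑ z, W z * (#{σ | bad (swap σ z)} : ℝ) := by
    have h₁ : ∀ σ : Fin m → Bool, ∑ z, W z * (if bad z then (1 : ℝ) else 0) =
        ∑ z, W z * (if bad (swap σ z) then (1 : ℝ) else 0) := by
      intro σ
      rw [← Equiv.sum_comp (hswap σ).toPerm]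
      exact sum_congr rfl fun z _ => by
        rw [Function.Involutive.coe_toPerm, hWswap]
    have h₂ : ∑ σ : Fin m → Bool, ∑ z, W z * (if bad z then (1 : ℝ) else 0) =
        2 ^ m * ∑ z, W z * (if bad z then (1 : ℝ) else 0) := by
      rw [sum_const, card_univ, Fintype.card_fun, Fintype.card_bool, Fintype.card_fin,
        nsmul_eq_mul, Nat.cast_pow, Nat.cast_ofNat]
    rw [← h₂, sum_congr rfl fun σ _ => h₁ σ, sum_comm]
    refine sum_congr rfl fun z _ => ?_
    rw [← mul_sum, card_filter]
    push_cast
    rfl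
  have hfinal : (2 : ℝ) ^ m * (1 / (2 * Q)) * 2 ^ k ≤
      (D + 2) * (4 * Q * k + 1) ^ (D + 1) * 2 ^ m := by
    calc (2 : ℝ) ^ m * (1 / (2 * Q)) * 2 ^ k
        ≤ (2 ^ m * ∑ z, W z * (if bad z then (1 : ℝ) else 0)) * 2 ^ k := by gcongr
      _ = ∑ z, W z * ((#{σ | bad (swap σ z)} : ℝ) * 2 ^ k) := by
          rw [havg, sum_mul]
          exact sum_congr rfl fun z _ => by ring
      _ ≤ ∑ z, W z * ((D + 2) * (4 * Q * k + 1) ^ (D + 1) * 2 ^ m) := by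
          refine sum_le_sum fun z _ => mul_le_mul_of_nonneg_left ?_ (hW z)
          exact_mod_cast hcount z
      _ = _ := by rw [← sum_mul, hWtot, one_mul]
  have hbig : (2 * Q * (D + 2) * (4 * Q * k + 1) ^ (D + 1) : ℝ) < 2 ^ k := by exact_mod_cast hkbig
  have hQ' : (0 : ℝ) < Q := by exact_mod_cast hQ
  have hm' : (0 : ℝ) < 2 ^ m := by positivity
  have h₁ : (2 : ℝ) ^ m * 2 ^ k ≤ 2 ^ m * (2 * Q * (D + 2) * (4 * Q * k + 1) ^ (D + 1)) := by
    have : (2 : ℝ) ^ m * 2 ^ k = 2 * Q * (2 ^ m * (1 / (2 * Q)) * 2 ^ k) := by field_simp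
    rw [this]
    calc _ ≤ 2 * Q * ((D + 2) * (4 * Q * k + 1) ^ (D + 1) * 2 ^ m : ℝ) := by gcongr
      _ = _ := by ring
  exact absurd (le_of_mul_le_mul_left h₁ hm') hbig.not_ge

open Classical in
/-- In a `D`-degenerate graph, the sum over the edges of the smaller weight of the two ends is at
most `D` times the total weight; here every edge is counted in both directions. -/
lemma sum_min_le_of_degenerate {V : Type*} {D : ℕ} {E : SimpleGraph V} {g : V → ℝ}
    (hg : ∀ v, 0 ≤ g v) (C : Finset V)
    (hE : ∀ S ⊆ C, S.Nonempty → ∃ u ∈ S, #{v ∈ S | E.Adj u v} ≤ D) :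
    ∑ u ∈ C, ∑ v ∈ C, (if E.Adj u v then min (g u) (g v) else 0) ≤ 2 * D * ∑ u ∈ C, g u := by
  induction C using Finset.strongInduction with
  | H C ih =>
    rcases C.eq_empty_or_nonempty with rfl | hne
    · simp
    obtain ⟨u, hu, hdeg⟩ := hE C subset_rfl hne
    have hih := ih (C.erase u) (erase_ssubset hu) fun S hS => hE S (hS.trans (erase_subset _ _))
    have hrow : ∑ v ∈ C.erase u, (if E.Adj u v then min (g u) (g v) else 0) ≤ D * g u := by
      calc ∑ v ∈ C.erase u, (if E.Adj u v then min (g u) (g v) else 0)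
          ≤ ∑ v ∈ C, (if E.Adj u v then g u else 0) := by
            refine sum_le_sum_of_subset_of_nonneg (erase_subset _ _) ?_ |>.trans'
              (sum_le_sum fun v _ => ?_)
            · intro v _ _
              split_ifs
              exacts [hg u, le_rfl]
            · split_ifs
              exacts [min_le_left _ _, le_rfl]
        _ = #{v ∈ C | E.Adj u v} * g u := by rw [← sum_filter, sum_const, nsmul_eq_mul]
        _ ≤ D * g u := by
            gcongr
            exact hg u
    have hcol : ∑ v ∈ C.erase u, (if E.Adj v u then min (g v) (g u) else 0) ≤ D * g u := by
      simpa only [E.adj_comm _ u, min_comm _ (g u)] using hrow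
    have hsplit := add_sum_erase C g hu
    rw [← add_sum_erase C (fun x => ∑ v ∈ C, (if E.Adj x v then min (g x) (g v) else 0)) hu,
      ← add_sum_erase C (fun v => (if E.Adj u v then min (g u) (g v) else 0)) hu]
    have hrest : ∑ x ∈ C.erase u, ∑ v ∈ C, (if E.Adj x v then min (g x) (g v) else 0) =
        ∑ x ∈ C.erase u, (if E.Adj x u then min (g x) (g u) else 0) +
          ∑ x ∈ C.erase u, ∑ v ∈ C.erase u, (if E.Adj x v then min (g x) (g v) else 0) := by
      rw [← sum_add_distrib]
      refine sum_congr rfl fun x _ => ?_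
      rw [← add_sum_erase C (fun v => (if E.Adj x v then min (g x) (g v) else 0)) hu]
    rw [hrest, if_neg E.irrefl, ← hsplit]
    linarith

open Classical in
/-- A maximal family of neighborhoods whose pairwise intersections are small, chosen greedily by
increasing weight. -/
lemma exists_greedy_family {V : Type*} {g : V → ℝ} {I : V → V → ℝ} {δ : ℝ}
    (hI : ∀ u v, I u v = I v u) (hself : ∀ v, δ * g v ≤ I v v) (S : Finset V) :
    ∃ M ⊆ S, (∀ u ∈ M, ∀ v ∈ M, u ≠ v → I u v ≤ δ * min (g u) (g v)) ∧
      ∀ v ∈ S, ∃ u ∈ M, δ * g u ≤ I u v := by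
  induction S using Finset.induction_on_max_value g with
  | empty => exact ⟨∅, subset_rfl, by simp, by simp⟩
  | insert v S hv hmax ih =>
    obtain ⟨M, hMS, hM, hcov⟩ := ih
    by_cases h : ∃ u ∈ M, δ * g u ≤ I u v
    · refine ⟨M, hMS.trans (subset_insert _ _), hM, fun x hx => ?_⟩
      rcases mem_insert.1 hx with rfl | hx
      exacts [h, hcov x hx]
    · push Not at h
      have hnew : ∀ u ∈ M, I u v ≤ δ * min (g u) (g v) := by
        intro u hu
        rw [min_eq_left (hmax u (hMS hu))]
        exact (h u hu).le
      refine ⟨insert v M, insert_subset_insert _ hMS, fun x hx y hy hxy => ?_, fun x hx => ?_⟩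
      · rcases mem_insert.1 hx with rfl | hx' <;> rcases mem_insert.1 hy with rfl | hy'
        · exact absurd rfl hxy
        · rw [hI, min_comm]
          exact hnew y hy'
        · exact hnew x hx'
        · exact hM x hx' y hy' hxy
      · rcases mem_insert.1 hx with rfl | hx
        · exact ⟨x, mem_insert_self _ _, hself x⟩
        · obtain ⟨u, hu, hux⟩ := hcov x hx
          exact ⟨u, mem_insert_of_mem hu, hux⟩

open Classical in
/-- A family of neighborhoods with pairwise intersections that are small compared to both members
has bounded total weight. -/
lemma IsSupported.sum_weight_le_two {V : Type*} [Fintype V] {D : ℕ} {R : V → V → Prop}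
    (hR : IsSupported D R) {w : V → ℝ} (hw : ∀ v, 0 ≤ w v) (hsum : ∑ v, w v = 1) (M : Finset V)
    (hM : ∀ u ∈ M, ∀ v ∈ M, u ≠ v → ∑ x with R u x ∧ R v x, w x ≤
      1 / (4 * D + 4 : ℝ) * min (∑ x with R u x, w x) (∑ x with R v x, w x)) :
    ∑ u ∈ M, ∑ x with R u x, w x ≤ 2 := by
  obtain ⟨E, hE₁, hE₂⟩ := hR M
  have hdepth : ∀ x, (∑ u ∈ M, if R u x then 1 else 0 : ℝ) ≤
      1 + ∑ u ∈ M, ∑ v ∈ M, if E.Adj u v ∧ R u x ∧ R v x then 1 else 0 := by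
    intro x
    have hnn : ∀ u ∈ M, (0 : ℝ) ≤ ∑ v ∈ M, if E.Adj u v ∧ R u x ∧ R v x then 1 else 0 :=
      fun u _ => sum_nonneg fun v _ => by split_ifs <;> norm_num
    by_cases h : ∃ a ∈ M, ∃ b ∈ M, a ≠ b ∧ R a x ∧ R b x
    · obtain ⟨a, ha, b, hb, hab, hax, hbx⟩ := h
      refine (sum_le_sum fun u hu => ?_).trans (le_add_of_nonneg_left zero_le_one)
      split_ifs with hux
      · obtain ⟨c, hc, huc, hcx⟩ : ∃ c ∈ M, u ≠ c ∧ R c x := by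
          by_cases hua : u = a
          · exact ⟨b, hb, hua ▸ hab, hbx⟩
          · exact ⟨a, ha, hua, hax⟩
        obtain ⟨d, hd, hdx, hud⟩ := hE₂ x u hu c hc huc hux hcx
        refine le_trans ?_ (single_le_sum (f := fun v => if E.Adj u v ∧ R u x ∧ R v x then (1 : ℝ)
          else 0) (fun v _ => by split_ifs <;> norm_num) hd)
        rw [if_pos ⟨hud, hux, hdx⟩]
      · exact hnn u hu
    · refine le_add_of_le_of_nonneg ?_ (sum_nonneg hnn)
      rw [sum_boole]
      have : #{u ∈ M | R u x} ≤ 1 := by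
        rw [card_le_one]
        intro a ha b hb
        by_contra hab
        exact h ⟨a, (mem_filter.1 ha).1, b, (mem_filter.1 hb).1, hab, (mem_filter.1 ha).2,
          (mem_filter.1 hb).2⟩
      exact_mod_cast this
  set g : V → ℝ := fun u => ∑ x with R u x, w x with hg
  have hg0 : ∀ u, 0 ≤ g u := fun u => sum_nonneg fun x _ => hw x
  have h₁ : ∑ u ∈ M, g u ≤
      1 + ∑ u ∈ M, ∑ v ∈ M, if E.Adj u v then ∑ x with R u x ∧ R v x, w x else 0 := by
    calc ∑ u ∈ M, g u = ∑ x, w x * ∑ u ∈ M, if R u x then 1 else 0 := by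
          simp only [hg, sum_filter, mul_sum]
          rw [sum_comm]
          simp
      _ ≤ ∑ x, w x * (1 + ∑ u ∈ M, ∑ v ∈ M, if E.Adj u v ∧ R u x ∧ R v x then 1 else 0) :=
          sum_le_sum fun x _ => mul_le_mul_of_nonneg_left (hdepth x) (hw x)
      _ = _ := by
          simp only [mul_add, mul_one, sum_add_distrib, hsum, mul_sum]
          congr 1
          rw [sum_comm]
          refine sum_congr rfl fun u _ => ?_
          rw [sum_comm]
          refine sum_congr rfl fun v _ => ?_
          by_cases huv : E.Adj u v
          · simp [huv, sum_filter]
          · simp [huv]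
  have h₂ : ∑ u ∈ M, ∑ v ∈ M, (if E.Adj u v then ∑ x with R u x ∧ R v x, w x else 0) ≤
      1 / (4 * D + 4 : ℝ) * (2 * D * ∑ u ∈ M, g u) := by
    refine le_trans ?_ (mul_le_mul_of_nonneg_left (sum_min_le_of_degenerate hg0 M hE₁)
      (by positivity))
    simp only [mul_sum]
    refine sum_le_sum fun u hu => sum_le_sum fun v hv => ?_
    split_ifs with huv
    · exact hM u hu v hv huv.ne
    · simp
  have h₃ : 1 / (4 * D + 4 : ℝ) * (2 * D * ∑ u ∈ M, g u) ≤ 1 / 2 * ∑ u ∈ M, g u := by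
    rw [← mul_assoc]
    refine mul_le_mul_of_nonneg_right ?_ (sum_nonneg fun u _ => hg0 u)
    rw [one_div_mul_eq_div, div_le_div_iff₀ (by positivity) (by norm_num)]
    linarith
  linarith

open Classical in
/-- A fractional dominating set can be rounded at the cost of a constant factor. -/
lemma exists_dominating (D : ℕ) : ∃ s : ℕ, ∀ (V : Type) [Fintype V] (R : V → V → Prop),
    IsSupported D R → (∀ u v, R u v → R v u) → ∀ w : V → ℝ, (∀ v, 0 ≤ w v) → ∑ v, w v = 1 →
      ∀ N : ℕ, 0 < N → (∀ v, 1 / (N : ℝ) ≤ ∑ x with R v x, w x) →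
        ∃ T : Finset V, #T ≤ s * N ∧ ∀ v, ∃ x ∈ T, R v x := by
  obtain ⟨m, hm⟩ := exists_net D (4 * D + 4) (by omega)
  refine ⟨2 * m, fun V _ R hR hsymm w hw hsum N hN hdom => ?_⟩
  set g : V → ℝ := fun u => ∑ x with R u x, w x with hg
  have hN' : (0 : ℝ) < N := by exact_mod_cast hN
  have hgpos : ∀ u, 0 < g u := fun u => (by positivity : (0 : ℝ) < 1 / N).trans_le (hdom u)
  have hδ : 1 / (4 * D + 4 : ℝ) ≤ 1 := by
    rw [div_le_one (by positivity)]
    have : (0 : ℝ) ≤ D := Nat.cast_nonneg D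
    linarith
  obtain ⟨M, -, hM, hcov⟩ := exists_greedy_family (g := g)
    (I := fun u v => ∑ x with R u x ∧ R v x, w x) (δ := 1 / (4 * D + 4 : ℝ))
    (fun u v => by simp only [and_comm]) (fun v => by
      simp only [and_self]
      exact mul_le_of_le_one_left (hgpos v).le hδ) univ
  have hMcard : #M ≤ 2 * N := by
    have h := hR.sum_weight_le_two hw hsum M hM
    have h' : (#M : ℝ) * (1 / N) ≤ 2 := by
      refine le_trans ?_ h
      rw [← nsmul_eq_mul]
      exact card_nsmul_le_sum _ _ _ fun u _ => hdom u
    rw [mul_one_div, div_le_iff₀ hN'] at h'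
    exact_mod_cast h'
  have hnet : ∀ u, ∃ T : Finset V, #T ≤ m ∧
      ∀ v, 1 / (4 * D + 4 : ℝ) * g u ≤ ∑ x with R u x ∧ R v x, w x → ∃ x ∈ T, R v x := by
    intro u
    obtain ⟨T, hT, hhit⟩ := hm V R hR hsymm (fun x => if R u x then w x / g u else 0)
      (fun x => by split_ifs; exacts [div_nonneg (hw x) (hgpos u).le, le_rfl])
      (by rw [← sum_filter, ← sum_div, div_self (hgpos u).ne'])
    refine ⟨T, hT, fun v hv => hhit v ?_⟩
    rw [← sum_filter, filter_filter, ← sum_div, le_div_iff₀ (hgpos u)]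
    simp only [and_comm (a := R v _)]
    push_cast
    exact hv
  choose T hT hhit using hnet
  refine ⟨M.biUnion T, ?_, fun v => ?_⟩
  · calc #(M.biUnion T) ≤ ∑ u ∈ M, #(T u) := card_biUnion_le
      _ ≤ ∑ u ∈ M, m := sum_le_sum fun u _ => hT u
      _ = #M * m := by rw [sum_const, smul_eq_mul]
      _ ≤ 2 * N * m := Nat.mul_le_mul_right _ hMcard
      _ = 2 * m * N := by ring
  · obtain ⟨u, hu, huv⟩ := hcov v (mem_univ v)
    obtain ⟨x, hx, hvx⟩ := hhit u v huv
    exact ⟨x, mem_biUnion.2 ⟨u, hu, hx⟩, hvx⟩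

open Classical in
/-- Among finitely many samples, there are few pairs of samples having a common neighbor that is
related to no further sample. -/
lemma IsSupported.card_private_pairs_le {V : Type*} {D n : ℕ} {R : V → V → Prop}
    (hR : IsSupported D R) (x : Fin n → V) :
    #{p : Fin n × Fin n | x p.1 ≠ x p.2 ∧ ∃ z, R (x p.1) z ∧ R (x p.2) z ∧
      ∀ k, k ≠ p.1 → k ≠ p.2 → ¬ R (x k) z} ≤ 2 * D * n := by
  set C := univ.image x with hC
  have hmem : ∀ i, x i ∈ C := fun i => mem_image_of_mem _ (mem_univ i)
  obtain ⟨E, hE₁, hE₂⟩ := hR C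
  have h₁ : #{p ∈ C ×ˢ C | E.Adj p.1 p.2} ≤ 2 * D * n := by
    have h := sum_min_le_of_degenerate (g := fun _ => 1) (fun _ => zero_le_one) C hE₁
    have hCn : #C ≤ n := card_image_le.trans (by simp)
    have : (#{p ∈ C ×ˢ C | E.Adj p.1 p.2} : ℝ) ≤ 2 * D * #C := by
      simp only [min_self, sum_const, nsmul_eq_mul, mul_one] at h
      rwa [← sum_boole, sum_product]
    have h' : #{p ∈ C ×ˢ C | E.Adj p.1 p.2} ≤ 2 * D * #C := by exact_mod_cast this
    exact h'.trans (Nat.mul_le_mul_left _ hCn)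
  refine le_trans (card_le_card_of_injOn (fun p => (x p.1, x p.2)) ?_ ?_) h₁
  · rintro ⟨i, j⟩ hij
    obtain ⟨hne, z, hiz, hjz, hz⟩ := (mem_filter.1 hij).2
    obtain ⟨d, hd, hdz, hadj⟩ := hE₂ z (x i) (hmem i) (x j) (hmem j) hne hiz hjz
    obtain ⟨k, -, rfl⟩ := mem_image.1 hd
    refine mem_filter.2 ⟨mem_product.2 ⟨hmem i, hmem j⟩, ?_⟩
    by_cases hki : k = i
    · exact absurd (hki ▸ hadj) E.irrefl
    · by_cases hkj : k = j
      · exact hkj ▸ hadj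
      · exact absurd hdz (hz k hki hkj)
  · rintro ⟨i, j⟩ hij ⟨i', j'⟩ - h
    obtain ⟨hne, z, hiz, hjz, hz⟩ := (mem_filter.1 hij).2
    obtain ⟨hi, hj⟩ := Prod.mk.inj h
    dsimp only at hi hj hne hiz hjz hz
    have hi' : i' = i := by
      by_contra hc
      by_cases hij' : i' = j
      · exact hne (hi.trans (hij' ▸ rfl))
      · exact hz i' hc hij' (hi ▸ hiz)
    have hj' : j' = j := by
      by_contra hc
      by_cases hji' : j' = i
      · exact hne ((hj.trans (hji' ▸ rfl)).symm)
      · exact hz j' hji' hc (hj ▸ hjz)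
    rw [hi', hj']

open Classical in
/-- The expected number of pairs of samples with a private common neighbor is large if there are
many conflicting pairs and all neighborhoods are light. -/
lemma le_prob_private_pair {V : Type*} [Fintype V] {R : V → V → Prop} {p : V → ℝ}
    (hp : ∀ v, 0 ≤ p v) (hsum : ∑ v, p v = 1) {N : ℕ} (hN : 0 < N)
    (hlight : ∀ z, ∑ y with R y z, p y ≤ 1 / (2 * N : ℝ)) {i j : Fin (N + 2)} (hij : i ≠ j) :
    1 / 2 * ∑ u, ∑ v, (if u ≠ v ∧ ∃ z, R u z ∧ R v z then p u * p v else 0) ≤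
      ∑ x : Fin (N + 2) → V, (∏ k, p (x k)) * if x i ≠ x j ∧ ∃ z, R (x i) z ∧ R (x j) z ∧
        ∀ k, k ≠ i → k ≠ j → ¬ R (x k) z then 1 else 0 := by
  set good : (Fin (N + 2) → V) → Prop := fun x => x i ≠ x j ∧ ∃ z, R (x i) z ∧ R (x j) z ∧
    ∀ k, k ≠ i → k ≠ j → ¬ R (x k) z with hgood
  have hN' : (0 : ℝ) < N := by exact_mod_cast hN
  have hlow : (1 / 2 : ℝ) ≤ (1 - 1 / (2 * N : ℝ)) ^ N := by
    have h := one_add_mul_le_pow (a := -(1 / (2 * N : ℝ))) (by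
      rw [neg_le_neg_iff, div_le_iff₀ (by positivity)]
      have : (1 : ℝ) ≤ N := by exact_mod_cast hN
      linarith) N
    have e : 1 + (N : ℝ) * -(1 / (2 * N : ℝ)) = 1 / 2 := by field_simp; norm_num
    rw [e, ← sub_eq_add_neg] at h
    exact h
  have hbase : (0 : ℝ) ≤ 1 - 1 / (2 * N : ℝ) := by
    rw [sub_nonneg, div_le_one (by positivity)]
    have : (1 : ℝ) ≤ N := by exact_mod_cast hN
    linarith
  have hcompl : ∀ z, 1 - 1 / (2 * N : ℝ) ≤ ∑ y, p y * (if R y z then 0 else 1) := by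
    intro z
    have h := hlight z
    have : ∑ y, p y * (if R y z then (0 : ℝ) else 1) + ∑ y with R y z, p y = 1 := by
      rw [sum_filter, ← sum_add_distrib]
      exact (sum_congr rfl fun y _ => by split_ifs <;> simp).trans hsum
    linarith
  have hpair : ∀ u v, 1 / 2 * (if u ≠ v ∧ ∃ z, R u z ∧ R v z then p u * p v else 0) ≤
      ∑ x : Fin (N + 2) → V, (∏ k, p (x k)) *
        (if u = x i ∧ v = x j then (if good x then 1 else 0) else 0) := by
    intro u v
    have hnn : ∀ x : Fin (N + 2) → V, 0 ≤ ∏ k, p (x k) := fun x => prod_nonneg fun k _ => hp _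
    split_ifs with h
    · obtain ⟨huv, z, huz, hvz⟩ := h
      let f : Fin (N + 2) → V → ℝ := fun k y => p y *
        if k = i then (if y = u then 1 else 0) else
          if k = j then (if y = v then 1 else 0) else (if R y z then 0 else 1)
      have hprod : 1 / 2 * (p u * p v) ≤ ∏ k, ∑ y, f k y := by
        have hfi : ∑ y, f i y = p u := by simp [f]
        have hfj : ∑ y, f j y = p v := by simp [f, hij.symm]
        have hfk : ∀ k ∈ (univ.erase i).erase j, 1 - 1 / (2 * N : ℝ) ≤ ∑ y, f k y := by
          intro k hk
          obtain ⟨hkj, hk⟩ := mem_erase.1 hk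
          have hki := (mem_erase.1 hk).1
          simpa only [f, if_neg hki, if_neg hkj] using hcompl z
        have hcard : #((univ.erase i).erase j) = N := by
          rw [card_erase_of_mem (mem_erase.2 ⟨hij.symm, mem_univ j⟩),
            card_erase_of_mem (mem_univ i), card_univ, Fintype.card_fin]
          omega
        have hrest : (1 / 2 : ℝ) ≤ ∏ k ∈ (univ.erase i).erase j, ∑ y, f k y := by
          refine hlow.trans ?_
          calc (1 - 1 / (2 * N : ℝ)) ^ N = ∏ k ∈ (univ.erase i).erase j, (1 - 1 / (2 * N : ℝ)) := by
                rw [prod_const, hcard]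
            _ ≤ _ := prod_le_prod (fun _ _ => hbase) hfk
        rw [← mul_prod_erase univ _ (mem_univ i),
          ← mul_prod_erase (univ.erase i) _ (mem_erase.2 ⟨hij.symm, mem_univ j⟩), hfi, hfj]
        calc 1 / 2 * (p u * p v) = p u * (p v * (1 / 2)) := by ring
          _ ≤ _ := mul_le_mul_of_nonneg_left (mul_le_mul_of_nonneg_left hrest (hp v)) (hp u)
      refine hprod.trans ?_
      rw [← sum_pi_prod f]
      refine sum_le_sum fun x _ => ?_
      simp only [f, prod_mul_distrib]
      refine mul_le_mul_of_nonneg_left ?_ (hnn x)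
      by_cases hx : u = x i ∧ v = x j ∧ good x
      · rw [if_pos ⟨hx.1, hx.2.1⟩, if_pos hx.2.2]
        refine prod_le_one (fun k _ => ?_) (fun k _ => ?_) <;> split_ifs <;> norm_num
      · have hzero : ∃ k, (if k = i then (if x k = u then (1 : ℝ) else 0) else
            if k = j then (if x k = v then 1 else 0) else (if R (x k) z then 0 else 1)) = 0 := by
          by_contra! hc
          have hi : x i = u := by
            by_contra h
            exact hc i (by rw [if_pos rfl, if_neg h])
          have hj : x j = v := by
            by_contra h
            exact hc j (by rw [if_neg hij.symm, if_pos rfl, if_neg h])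
          refine hx ⟨hi.symm, hj.symm, hi ▸ hj ▸ huv, z, hi ▸ huz, hj ▸ hvz, fun k hki hkj hk => ?_⟩
          exact hc k (by rw [if_neg hki, if_neg hkj, if_pos hk])
        obtain ⟨k, hk⟩ := hzero
        rw [prod_eq_zero (mem_univ k) hk]
        split_ifs <;> norm_num
    · rw [mul_zero]
      exact sum_nonneg fun x _ => mul_nonneg (hnn x) (by split_ifs <;> norm_num)
  calc _ ≤ ∑ u, ∑ v, ∑ x : Fin (N + 2) → V, (∏ k, p (x k)) *
        (if u = x i ∧ v = x j then (if good x then 1 else 0) else 0) := by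
        rw [mul_sum]
        refine sum_le_sum fun u _ => ?_
        rw [mul_sum]
        exact sum_le_sum fun v _ => hpair u v
    _ = ∑ x : Fin (N + 2) → V, ∑ u, ∑ v, (∏ k, p (x k)) *
        (if u = x i ∧ v = x j then (if good x then 1 else 0) else 0) := by
        rw [sum_comm]
        simp only [sum_comm (s := (univ : Finset V)) (t := (univ : Finset (Fin (N + 2) → V)))]
        exact sum_congr rfl fun x _ => sum_comm
    _ = _ := by
        refine sum_congr rfl fun x _ => ?_
        change _ = (∏ k, p (x k)) * if good x then 1 else 0
        generalize (if good x then (1 : ℝ) else 0) = b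
        simp [ite_and]

open Classical in
/-- If all neighborhoods are light, then two random vertices rarely have a common neighbor. -/
lemma IsSupported.prob_conflict_le {V : Type*} [Fintype V] {D : ℕ} {R : V → V → Prop}
    (hR : IsSupported D R) {p : V → ℝ} (hp : ∀ v, 0 ≤ p v) (hsum : ∑ v, p v = 1) {N : ℕ}
    (hN : 0 < N) (hlight : ∀ z, ∑ y with R y z, p y ≤ 1 / (2 * N : ℝ)) :
    ∑ u, ∑ v, (if u ≠ v ∧ ∃ z, R u z ∧ R v z then p u * p v else 0) ≤ 4 * D / N := by
  set q := ∑ u, ∑ v, (if u ≠ v ∧ ∃ z, R u z ∧ R v z then p u * p v else 0) with hq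
  have hN' : (0 : ℝ) < N := by exact_mod_cast hN
  let good : (Fin (N + 2) → V) → Fin (N + 2) × Fin (N + 2) → Prop := fun x a =>
    x a.1 ≠ x a.2 ∧ ∃ z, R (x a.1) z ∧ R (x a.2) z ∧ ∀ k, k ≠ a.1 → k ≠ a.2 → ¬ R (x k) z
  have htot : ∑ x : Fin (N + 2) → V, ∏ k, p (x k) = 1 := by
    rw [sum_pi_prod fun _ => p]
    simp [hsum]
  have hcard : #(univ.offDiag : Finset (Fin (N + 2) × Fin (N + 2))) = (N + 2) * (N + 1) := by
    rw [offDiag_card, card_univ, Fintype.card_fin, ← Nat.mul_sub_one]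
    rfl
  have h : ((N + 2) * (N + 1) : ℝ) * (1 / 2 * q) ≤ 2 * D * (N + 2) := by
    calc ((N + 2) * (N + 1) : ℝ) * (1 / 2 * q)
        = ∑ a ∈ (univ.offDiag : Finset (Fin (N + 2) × Fin (N + 2))), 1 / 2 * q := by
          rw [sum_const, hcard, nsmul_eq_mul]
          push_cast
          ring
      _ ≤ ∑ a ∈ (univ.offDiag : Finset (Fin (N + 2) × Fin (N + 2))),
          ∑ x : Fin (N + 2) → V, (∏ k, p (x k)) * if good x a then 1 else 0 :=
          sum_le_sum fun a ha => le_prob_private_pair hp hsum hN hlight (mem_offDiag.1 ha).2.2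
      _ = ∑ x : Fin (N + 2) → V, (∏ k, p (x k)) *
          ∑ a ∈ (univ.offDiag : Finset (Fin (N + 2) × Fin (N + 2))), if good x a then 1 else 0 := by
          rw [sum_comm]
          simp only [mul_sum]
      _ ≤ ∑ x : Fin (N + 2) → V, (∏ k, p (x k)) * (2 * D * (N + 2)) := by
          refine sum_le_sum fun x _ => mul_le_mul_of_nonneg_left ?_ (prod_nonneg fun k _ => hp _)
          rw [sum_boole]
          have h₁ : #{a | good x a} ≤ 2 * D * (N + 2) := by
            convert hR.card_private_pairs_le x
          have h₂ : #{a ∈ (univ.offDiag : Finset (Fin (N + 2) × Fin (N + 2))) | good x a} ≤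
              #{a | good x a} := card_le_card (filter_subset_filter _ (subset_univ _))
          exact_mod_cast h₂.trans h₁
      _ = _ := by rw [← sum_mul, htot, one_mul]
  have hq0 : 0 ≤ q := sum_nonneg fun u _ => sum_nonneg fun v _ => by
    split_ifs
    exacts [mul_nonneg (hp u) (hp v), le_rfl]
  rw [le_div_iff₀ hN']
  have h' : ((N : ℝ) + 2) * ((N + 1) * (1 / 2 * q)) ≤ (N + 2) * (2 * D) := by linarith
  have h'' := le_of_mul_le_mul_left h' (by positivity)
  nlinarith

open Classical in
/-- If independent sets have size at most `ν`, then every probability distribution gives some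
neighborhood a weight that is at least a constant multiple of `1 / ν`. -/
lemma exists_heavy (D : ℕ) : ∃ K : ℕ, 0 < K ∧ ∀ (V : Type) [Fintype V] (R : V → V → Prop),
    IsSupported D R → (∀ u v, R u v → R v u) → (∀ v, R v v) → ∀ ν : ℕ, 0 < ν →
      (∀ I : Finset V, (∀ a ∈ I, ∀ b ∈ I, a ≠ b → ∀ z, ¬ (R a z ∧ R b z)) → #I ≤ ν) →
        ∀ p : V → ℝ, (∀ v, 0 ≤ p v) → ∑ v, p v = 1 →
          ∃ v, 1 / ((K * ν : ℕ) : ℝ) ≤ ∑ x with R v x, p x := by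
  refine ⟨2 * (16 * D + 5), by omega, fun V _ R hR hsymm hrefl ν hν hind p hp hsum => ?_⟩
  by_contra! hcon
  set N := (16 * D + 5) * ν with hN
  have hNpos : 0 < N := Nat.mul_pos (by omega) hν
  have hN' : (0 : ℝ) < N := by exact_mod_cast hNpos
  have hlight : ∀ z, ∑ y with R y z, p y ≤ 1 / (2 * N : ℝ) := by
    intro z
    have h := (hcon z).le
    rw [mul_assoc, ← hN] at h
    push_cast at h
    refine (le_of_eq ?_).trans h
    exact sum_congr (filter_congr fun y _ => ⟨hsymm y z, hsymm z y⟩) fun _ _ => rfl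
  have hsingle : ∀ v, p v ≤ 1 / N := by
    intro v
    calc p v ≤ ∑ y with R y v, p y :=
          single_le_sum (fun y _ => hp y) (mem_filter.2 ⟨mem_univ v, hrefl v⟩)
      _ ≤ 1 / (2 * N : ℝ) := hlight v
      _ ≤ 1 / N := by
          apply one_div_le_one_div_of_le hN'
          linarith
  set a : V → ℝ := fun u => ∑ v with ∃ z, R u z ∧ R v z, p v with ha
  have ha0 : ∀ u, 0 ≤ a u := fun u => sum_nonneg fun v _ => hp v
  have hmean : ∑ u, p u * a u ≤ (4 * D + 1) / N := by
    calc ∑ u, p u * a u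
        ≤ ∑ u, ((∑ v, if u ≠ v ∧ ∃ z, R u z ∧ R v z then p u * p v else 0) + p u * (1 / N)) := by
          refine sum_le_sum fun u _ => ?_
          simp only [ha, sum_filter, mul_sum]
          calc ∑ v, p u * (if ∃ z, R u z ∧ R v z then p v else 0)
              ≤ ∑ v, ((if u ≠ v ∧ ∃ z, R u z ∧ R v z then p u * p v else 0) +
                  if u = v then p u * p v else 0) := by
                refine sum_le_sum fun v _ => ?_
                have := mul_nonneg (hp u) (hp v)
                by_cases huv : u = v <;> by_cases hc : ∃ z, R u z ∧ R v z <;> simp [huv, hc]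
                all_goals split_ifs <;> nlinarith [mul_nonneg (hp v) (hp v)]
            _ ≤ _ := by
                rw [sum_add_distrib, sum_ite_eq, if_pos (mem_univ u)]
                have := mul_le_mul_of_nonneg_left (hsingle u) (hp u)
                linarith
      _ ≤ 4 * D / N + 1 / N := by
          rw [sum_add_distrib, ← sum_mul, hsum, one_mul]
          have := hR.prob_conflict_le hp hsum hNpos hlight
          linarith
      _ = _ := by ring
  set c : ℝ := (4 * D + 1) / N with hc
  have hcpos : 0 < c := by positivity
  set W : Finset V := {v | a v ≤ 2 * c} with hW
  have hWmass : 1 / 2 ≤ ∑ v ∈ W, p v := by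
    have hsplit := sum_filter_add_sum_filter_not univ (fun v => a v ≤ 2 * c) p
    have hbad : 2 * c * ∑ v with ¬ a v ≤ 2 * c, p v ≤ c := by
      refine le_trans ?_ hmean
      rw [mul_sum]
      refine le_trans (sum_le_sum fun v hv => ?_)
        (sum_le_sum_of_subset_of_nonneg (filter_subset _ _) fun v _ _ => mul_nonneg (hp v) (ha0 v))
      rw [mul_comm]
      exact mul_le_mul_of_nonneg_left (not_le.1 (mem_filter.1 hv).2).le (hp v)
    have hbad' : ∑ v with ¬ a v ≤ 2 * c, p v ≤ 1 / 2 := by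
      have : c * (2 * ∑ v with ¬ a v ≤ 2 * c, p v) ≤ c * 1 := by linarith
      linarith [le_of_mul_le_mul_left this hcpos]
    rw [hsum] at hsplit
    linarith
  obtain ⟨I, hIW, hI, hcov⟩ := exists_greedy_family (g := fun _ : V => (1 : ℝ))
    (I := fun u v => if ∃ z, R u z ∧ R v z then 1 else 0) (δ := 1 / 2)
    (fun u v => by simp only [and_comm]) (fun v => by
      rw [if_pos ⟨v, hrefl v, hrefl v⟩]; norm_num) W
  have hIcard : #I ≤ ν := by
    refine hind I fun u hu v hv huv z hz => ?_
    have h := hI u hu v hv huv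
    rw [if_pos ⟨z, hz⟩, min_self] at h
    norm_num at h
  have hWle : ∑ v ∈ W, p v ≤ ∑ u ∈ I, a u := by
    calc ∑ v ∈ W, p v ≤ ∑ v ∈ W, ∑ u ∈ I, (if ∃ z, R u z ∧ R v z then p v else 0) := by
          refine sum_le_sum fun v hv => ?_
          obtain ⟨u, hu, huv⟩ := hcov v hv
          have hconf : ∃ z, R u z ∧ R v z := by
            by_contra h
            rw [if_neg h] at huv
            norm_num at huv
          refine le_trans ?_ (single_le_sum (f := fun u => if ∃ z, R u z ∧ R v z then p v else 0)
            (fun u _ => by split_ifs; exacts [hp v, le_rfl]) hu)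
          rw [if_pos hconf]
      _ ≤ ∑ v, ∑ u ∈ I, (if ∃ z, R u z ∧ R v z then p v else 0) :=
          sum_le_sum_of_subset_of_nonneg (subset_univ _) fun v _ _ =>
            sum_nonneg fun u _ => by split_ifs; exacts [hp v, le_rfl]
      _ = _ := by
          rw [sum_comm]
          simp only [ha, sum_filter]
  have hIle : ∑ u ∈ I, a u ≤ ν * (2 * c) := by
    calc ∑ u ∈ I, a u ≤ ∑ u ∈ I, 2 * c := sum_le_sum fun u hu => (mem_filter.1 (hIW hu)).2
      _ = #I * (2 * c) := by rw [sum_const, nsmul_eq_mul]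
      _ ≤ ν * (2 * c) := by
          gcongr
  have hνc : (ν : ℝ) * (2 * c) < 1 / 2 := by
    have hν' : (0 : ℝ) < ν := by exact_mod_cast hν
    have e : (ν : ℝ) * (2 * c) = (8 * D + 2) / (16 * D + 5) := by
      rw [hc, hN]
      push_cast
      field_simp
      ring
    rw [e, div_lt_div_iff₀ (by positivity) (by norm_num)]
    linarith
  linarith

open Classical in
/-- Linear programming duality for domination: if every probability distribution has a heavy
neighborhood, then some probability distribution makes all neighborhoods heavy. -/
lemma exists_fractional_dominating {V : Type*} [Fintype V] [Nonempty V] {R : V → V → Prop} {η : ℝ}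
    (hsymm : ∀ u v, R u v → R v u)
    (h : ∀ p : V → ℝ, (∀ v, 0 ≤ p v) → ∑ v, p v = 1 → ∃ v, η ≤ ∑ x with R v x, p x) :
    ∃ w : V → ℝ, (∀ v, 0 ≤ w v) ∧ ∑ v, w v = 1 ∧ ∀ v, η ≤ ∑ x with R v x, w x := by
  by_contra! hcon
  let L : (V → ℝ) →ₗ[ℝ] (V → ℝ) :=
    { toFun := fun w v => ∑ x with R v x, w x
      map_add' := fun w w' => funext fun v => sum_add_distrib
      map_smul' := fun r w => funext fun v => by simp [mul_sum] }
  have hL : ∀ w v, L w v = ∑ x with R v x, w x := fun _ _ => rfl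
  have hdisj : Disjoint (L '' stdSimplex ℝ V) (Set.Ici fun _ => η) := by
    rw [Set.disjoint_left]
    rintro _ ⟨w, hw, rfl⟩ hη
    obtain ⟨v, hv⟩ := hcon w hw.1 hw.2
    exact absurd (hη v) (not_le.2 hv)
  obtain ⟨f, s, t, hs, hst, ht⟩ := geometric_hahn_banach_compact_closed
    ((convex_stdSimplex ℝ V).linear_image L)
    ((isCompact_stdSimplex ℝ V).image L.continuous_of_finiteDimensional)
    (convex_Ici _) isClosed_Ici hdisj
  set c : V → ℝ := fun v => f (Pi.single v 1) with hc
  have hf : ∀ y, f y = ∑ v, y v * c v := by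
    intro y
    conv_lhs => rw [pi_eq_sum_univ' y]
    simp only [map_sum, map_smul, smul_eq_mul, hc]
  have hfη : t < η * ∑ v, c v := by
    have := ht _ (Set.mem_Ici.2 le_rfl)
    rwa [hf, ← mul_sum] at this
  have hc0 : ∀ v, 0 ≤ c v := by
    intro v
    by_contra! hv
    have hb := ht ((fun _ => η) + ((η * ∑ u, c u - t) / (-c v)) • Pi.single v 1) (by
      refine Set.mem_Ici.2 (le_add_of_nonneg_right ?_)
      refine smul_nonneg (div_nonneg (by linarith) (by linarith)) ?_
      exact Pi.single_nonneg.2 zero_le_one)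
    rw [map_add, map_smul, hf, ← mul_sum, smul_eq_mul] at hb
    have : (η * ∑ u, c u - t) / (-c v) * f (Pi.single v 1) = -(η * ∑ u, c u - t) := by
      change _ / (-c v) * c v = _
      field_simp [hv.ne]
    linarith
  have hcol : ∀ v, f (L (Pi.single v 1)) = ∑ x with R v x, c x := by
    intro v
    rw [hf, sum_filter]
    refine sum_congr rfl fun x _ => ?_
    have : R v x ↔ R x v := ⟨hsymm v x, hsymm x v⟩
    simp [hL, Pi.single_apply, this, -sum_boole]
  have hlt : ∀ v, ∑ x with R v x, c x < η * ∑ x, c x := by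
    intro v
    rw [← hcol]
    exact ((hs _ ⟨_, single_mem_stdSimplex ℝ v, rfl⟩).trans hst).trans hfη
  have hS : 0 < ∑ x, c x := by
    refine (sum_nonneg fun x _ => hc0 x).lt_of_ne fun h0 => ?_
    have v := Classical.arbitrary V
    have := hlt v
    rw [← h0, mul_zero] at this
    exact absurd this (not_lt.2 (sum_nonneg fun x _ => hc0 x))
  obtain ⟨v, hv⟩ := h (fun x => c x / ∑ x, c x) (fun x => div_nonneg (hc0 x) hS.le)
    (by rw [← sum_div, div_self hS.ne'])
  rw [← sum_div, le_div_iff₀ hS] at hv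
  exact absurd (hlt v) (not_lt.2 hv)

/-- Two vertices having no common vertex within distance `r` are more than `2 * r` apart. -/
lemma two_mul_lt_dist {V : Type*} {G : SimpleGraph V} {r : ℕ} {u v : V} (huv : G.Reachable u v)
    (h : ∀ z, ¬ (G.edist u z ≤ r ∧ G.edist v z ≤ r)) : 2 * r + 1 ≤ G.dist u v := by
  by_contra! hlt
  obtain ⟨p, hp⟩ := huv.exists_walk_length_eq_dist
  refine h (p.getVert r) ⟨(SimpleGraph.edist_le (p.take r)).trans ?_, ?_⟩
  · rw [p.take_length]
    exact_mod_cast min_le_left _ _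
  · rw [SimpleGraph.edist_comm]
    refine (SimpleGraph.edist_le (p.drop r)).trans ?_
    rw [p.drop_length]
    exact_mod_cast (by omega : p.length - r ≤ r)

/-- For every integer `t ≥ 1` there is a constant `c_t` such that in every
`K_t`-minor-free graph, for every `r ≥ 0`, the minimum size of an `r`-dominating set
is at most `c_t` times the maximum size of an `r`-independent set.
A set `S` is `r`-dominating if every vertex is at distance at most `r` from `S`, and
`r`-independent if any two distinct vertices of `S` are at distance at least `2r+1`. -/
theorem rDomination_le_const_mul_rIndependence_of_Kt_minor_free :
    ∀ t : ℕ, 1 ≤ t → ∃ c : ℕ,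
      ∀ (V : Type) [Fintype V] (G : SimpleGraph V),
        ¬ GraphMinor (⊤ : SimpleGraph (Fin t)) G →
        ∀ r : ℕ,
          sInf {n | ∃ S : Finset V,
              (∀ v : V, ∃ s ∈ S, G.Reachable s v ∧ G.dist s v ≤ r) ∧ S.card = n}
            ≤ c * sSup {n | ∃ S : Finset V,
              (∀ s ∈ S, ∀ s' ∈ S, s ≠ s' →
                G.Reachable s s' → 2 * r + 1 ≤ G.dist s s') ∧ S.card = n} := by
  intro t ht
  obtain ⟨t, rfl⟩ := Nat.exists_eq_add_of_le' ht
  obtain ⟨s, hs⟩ := exists_dominating (2 ^ (t + 1))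
  obtain ⟨K, hK, hheavy⟩ := exists_heavy (2 ^ (t + 1))
  refine ⟨s * K, fun V _ G hG r => ?_⟩
  classical
  rcases isEmpty_or_nonempty V with hV | hV
  · exact (Nat.sInf_le (Exists.intro ∅ ⟨fun v => hV.elim v, card_empty⟩)).trans (Nat.zero_le _)
  set A := {n | ∃ S : Finset V, (∀ s ∈ S, ∀ s' ∈ S, s ≠ s' →
    G.Reachable s s' → 2 * r + 1 ≤ G.dist s s') ∧ S.card = n} with hA
  have hbdd : BddAbove A := ⟨Fintype.card V, by rintro _ ⟨S, -, rfl⟩; exact card_le_univ S⟩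
  have hpos : 0 < sSup A := by
    refine lt_of_lt_of_le zero_lt_one (le_csSup hbdd ⟨{Classical.arbitrary V}, ?_, card_singleton _⟩)
    intro a ha b hb hab
    exact absurd ((mem_singleton.1 ha).trans (mem_singleton.1 hb).symm) hab
  have hsupp := isSupported_edist_le hG r
  have hsymm : ∀ u v, G.edist u v ≤ r → G.edist v u ≤ r := fun u v h => by
    rwa [SimpleGraph.edist_comm]
  obtain ⟨w, hw, hsum, hdom⟩ := exists_fractional_dominating hsymm
    (hheavy V _ hsupp hsymm (fun v => by simp) (sSup A) hpos fun I hI =>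
      le_csSup hbdd ⟨I, fun a ha b hb hab hreach =>
        two_mul_lt_dist hreach (hI a ha b hb hab), rfl⟩)
  obtain ⟨T, hT, hcov⟩ := hs V _ hsupp hsymm w hw hsum _ (Nat.mul_pos hK hpos) hdom
  rw [mul_assoc]
  refine (Nat.sInf_le (Exists.intro T ⟨fun v => ?_, rfl⟩)).trans hT
  obtain ⟨x, hx, hvx⟩ := hcov v
  have hreach : G.Reachable x v := (SimpleGraph.edist_ne_top_iff_reachable.1
    (ne_top_of_le_ne_top (ENat.natCast_ne_top r) hvx)).symm
  refine ⟨x, hx, hreach, ?_⟩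
  have := hsymm _ _ hvx
  rw [← hreach.coe_dist_eq_edist] at this
  exact_mod_cast this
end
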